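/- arXiv:2002.07785 — 12 statements merged into one kernel-verified Lean document; each statement's English description precedes it below -/
import Mathlib

section
/- There exist differentiable functions p, b, a : ℝ → ℂ with |p(t)| < 1 for all t that solve the truncated Szegő L(1) system i p' = (N − (1−|p|²)E)p + a·conj(b), i b' = (N+E)b + E·a·conj(p), i a' = (N−E)a − E|p|²·b·p (with N and E evaluated pointwise as N = |b|² + (1−|p|²)E, E = |bp+a|²/(1−|p|²)²), together with a constant ω > 0, such that, setting α_0(t) = b(t) and α_n(t) = (b(t)p(t)+a(t))·p(t)^{n−1} for n ≥ 1, for every real s > 1/2 one has lim_{t→∞} (1/t)·log( Σ_{n=0}^∞ (1+n)^{2s} |α_n(t)|² ) = (2s−1)ω. In particular the H^s Sobolev norms of this solution grow exponentially for every s > 1/2. -/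
open Filter Topology ComplexConjugate

/-- The quantity `E` on the invariant manifold `L(1)`:
`E = |bp+a|² / (1-|p|²)²`, evaluated pointwise in time. -/
noncomputable def Etr (p b a : ℝ → ℂ) (t : ℝ) : ℝ :=
  ‖b t * p t + a t‖ ^ 2 / (1 - ‖p t‖ ^ 2) ^ 2

/-- The quantity `N` on the invariant manifold `L(1)`:
`N = |b|² + (1-|p|²) E`, evaluated pointwise in time. -/
noncomputable def Ntr (p b a : ℝ → ℂ) (t : ℝ) : ℝ :=
  ‖b t‖ ^ 2 + (1 - ‖p t‖ ^ 2) * Etr p b a t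

/-!
Put `c = bp + a` and `q = 1 - |p|²`. We look for a solution with `E = 1` and `N = 3/2` constant,
that is `|c| = q` and `|b|² = 1/2 + |p|²`. Letting the phase of `p` rotate at rate `3q/4` allows
`p` to pass smoothly through `0`, and the system closes up in two real unknowns `σ = ±|p|` and `τ`,
where `b` is `-(3σ/4 + iτ)` up to a phase: `σ' = τ(1 - σ²)` and `τ' = (7/16)σ(1 - σ²)`.
Central projection turns this into the linear equation `x'' = (15/16)x` with `σ = x / √(1 + x²)`.
On a hyperbolic solution `|p| < 1` for all time, while `q⁻¹ = 1 + x²` grows like `e^(ωt)` with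
`ω = √15/2`. Since `∑ (2 + m)^(2s) x^m` is of order `(1 - x)^(-(2s + 1))` as `x → 1⁻` and
`|c|² = q²`, the squared `H^s` norm is of order `q^(-(2s - 1))`, that is `e^((2s - 1)ωt)`.
-/

namespace TruncatedSzego

open Asymptotics

section PowerSeries

variable {a r x : ℝ}

lemma add_natCast_rpow_mul_sqrt_pow_le (ha : 0 ≤ a) (hr : 0 ≤ r) (hx₀ : 0 ≤ x) (hx₁ : x < 1)
    (m : ℕ) :
    (a + m) ^ r * √x ^ m ≤ (2 * r) ^ r * Real.exp (a / 2) * (1 - x) ^ (-r) := by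
  have hq : 0 < 1 - x := sub_pos.2 hx₁
  have hpow : (a + m) ^ r ≤ (2 * r / (1 - x)) ^ r * Real.exp ((1 - x) / 2 * (a + m)) := by
    have h := ProbabilityTheory.rpow_abs_le_mul_exp_abs (a + m) hr (half_pos hq).ne'
    rwa [abs_of_nonneg (by positivity : 0 ≤ a + m), abs_of_pos (half_pos hq), div_div_eq_mul_div,
      mul_comm r 2] at h
  have hsqrt : √x ≤ Real.exp (-(1 - x) / 2) := by
    rw [Real.exp_half]
    exact Real.sqrt_le_sqrt (by linarith [Real.add_one_le_exp (-(1 - x))])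
  calc (a + m) ^ r * √x ^ m
      ≤ (2 * r / (1 - x)) ^ r * Real.exp ((1 - x) / 2 * (a + m)) *
          Real.exp (-(1 - x) / 2) ^ m := by gcongr
    _ = (2 * r) ^ r * Real.exp ((1 - x) * a / 2) * (1 - x) ^ (-r) := by
        rw [Real.div_rpow (by positivity) hq.le, Real.rpow_neg hq.le, ← Real.exp_nat_mul, mul_assoc,
          ← Real.exp_add]
        ring_nf
    _ ≤ (2 * r) ^ r * Real.exp (a / 2) * (1 - x) ^ (-r) := by
        gcongr
        exact mul_le_of_le_one_left ha (by linarith)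

lemma add_natCast_rpow_mul_pow_le (ha : 0 ≤ a) (hr : 0 ≤ r) (hx₀ : 0 ≤ x) (hx₁ : x < 1) (m : ℕ) :
    (a + m) ^ r * x ^ m ≤ (2 * r) ^ r * Real.exp (a / 2) * (1 - x) ^ (-r) * √x ^ m :=
  calc (a + m) ^ r * x ^ m = (a + m) ^ r * √x ^ m * √x ^ m := by
        rw [mul_assoc, ← mul_pow, Real.mul_self_sqrt hx₀]
    _ ≤ _ := mul_le_mul_of_nonneg_right (add_natCast_rpow_mul_sqrt_pow_le ha hr hx₀ hx₁ m)
        (by positivity)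

lemma hasSum_sqrt_pow (hx₁ : x < 1) : HasSum (fun m : ℕ ↦ √x ^ m) (1 - √x)⁻¹ :=
  hasSum_geometric_of_lt_one (Real.sqrt_nonneg x) ((Real.sqrt_lt' one_pos).2 (by simpa using hx₁))

lemma summable_add_natCast_rpow_mul_pow (ha : 0 ≤ a) (hr : 0 ≤ r) (hx₀ : 0 ≤ x) (hx₁ : x < 1) :
    Summable fun m : ℕ ↦ (a + m) ^ r * x ^ m :=
  .of_nonneg_of_le (fun _ ↦ by positivity) (add_natCast_rpow_mul_pow_le ha hr hx₀ hx₁)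
    ((hasSum_sqrt_pow hx₁).summable.mul_left _)

lemma tsum_add_natCast_rpow_mul_pow_le (ha : 0 ≤ a) (hr : 0 ≤ r) (hx₀ : 0 ≤ x) (hx₁ : x < 1) :
    ∑' m : ℕ, (a + m) ^ r * x ^ m ≤
      2 * (2 * r) ^ r * Real.exp (a / 2) * (1 - x) ^ (-(r + 1)) := by
  have hq : 0 < 1 - x := sub_pos.2 hx₁
  have hsqrt : √x < 1 := (Real.sqrt_lt' one_pos).2 (by simpa using hx₁)
  have hgeom : (1 - √x)⁻¹ ≤ 2 * (1 - x)⁻¹ := by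
    rw [inv_le_iff_one_le_mul₀ (by linarith), mul_assoc, ← div_eq_inv_mul,
      mul_div_assoc', one_le_div hq]
    nlinarith [Real.sq_sqrt hx₀]
  calc ∑' m : ℕ, (a + m) ^ r * x ^ m
      ≤ (2 * r) ^ r * Real.exp (a / 2) * (1 - x) ^ (-r) * (1 - √x)⁻¹ :=
        hasSum_le (add_natCast_rpow_mul_pow_le ha hr hx₀ hx₁)
          (summable_add_natCast_rpow_mul_pow ha hr hx₀ hx₁).hasSum
          ((hasSum_sqrt_pow hx₁).mul_left _)
    _ ≤ (2 * r) ^ r * Real.exp (a / 2) * (1 - x) ^ (-r) * (2 * (1 - x)⁻¹) := by gcongr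
    _ = 2 * (2 * r) ^ r * Real.exp (a / 2) * (1 - x) ^ (-(r + 1)) := by
        rw [neg_add, Real.rpow_add hq, Real.rpow_neg_one]
        ring

lemma add_natCast_rpow_mul_pow_div_le_tsum (ha : 0 ≤ a) (hr : 0 ≤ r) (hx₀ : 0 ≤ x) (hx₁ : x < 1)
    (M : ℕ) :
    (a + M) ^ r * x ^ M * (1 - x)⁻¹ ≤ ∑' m : ℕ, (a + m) ^ r * x ^ m := by
  have hsum := summable_add_natCast_rpow_mul_pow ha hr hx₀ hx₁
  have hgeom := (hasSum_geometric_of_lt_one hx₀ hx₁).mul_left ((a + M) ^ r * x ^ M)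
  calc (a + M) ^ r * x ^ M * (1 - x)⁻¹
      ≤ ∑' m : ℕ, (a + (m + M : ℕ)) ^ r * x ^ (m + M) := by
        refine hasSum_le (fun m ↦ ?_) hgeom ((summable_nat_add_iff M).2 hsum).hasSum
        rw [mul_assoc, ← pow_add, add_comm M m]
        gcongr
        exact le_add_self
    _ ≤ ∑' m : ℕ, (a + m) ^ r * x ^ m :=
        tsum_comp_le_tsum_of_inj hsum (fun _ ↦ by positivity) (add_left_injective M)

-- The terms of index at least `1 / (4 (1 - x))` already carry the full order of magnitude.
lemma le_tsum_add_natCast_rpow_mul_pow (ha : 0 ≤ a) (hr : 0 ≤ r) (hx₀ : 1 / 2 ≤ x) (hx₁ : x < 1) :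
    (1 / 4) ^ (r + 1) * (1 - x) ^ (-(r + 1)) ≤ ∑' m : ℕ, (a + m) ^ r * x ^ m := by
  have hq : 0 < 1 - x := sub_pos.2 hx₁
  set M := ⌈1 / 4 * (1 - x)⁻¹⌉₊
  have hM : 1 / 4 * (1 - x)⁻¹ ≤ M := Nat.le_ceil _
  have hMq : M * (1 - x) ≤ 3 / 4 := by
    have := Nat.ceil_lt_add_one (by positivity : 0 ≤ 1 / 4 * (1 - x)⁻¹)
    calc M * (1 - x) ≤ (1 / 4 * (1 - x)⁻¹ + 1) * (1 - x) := by gcongr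
      _ = 1 / 4 + (1 - x) := by field_simp
      _ ≤ 3 / 4 := by linarith
  have hpow : 1 / 4 ≤ x ^ M := by
    have := one_add_mul_le_pow (by linarith : -2 ≤ -(1 - x)) M
    rw [neg_sub, add_sub_cancel] at this
    linarith
  calc (1 / 4) ^ (r + 1) * (1 - x) ^ (-(r + 1))
      = (1 / 4 * (1 - x)⁻¹) ^ r * (1 / 4) * (1 - x)⁻¹ := by
        rw [neg_add, Real.rpow_add hq, Real.rpow_neg_one, Real.rpow_neg hq.le,
          Real.rpow_add_one (by norm_num), Real.mul_rpow (by norm_num) (by positivity),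
          Real.inv_rpow hq.le]
        ring
    _ ≤ (a + M) ^ r * x ^ M * (1 - x)⁻¹ := by
        gcongr
        linarith
    _ ≤ _ := add_natCast_rpow_mul_pow_div_le_tsum ha hr (by linarith) hx₁ M

lemma isTheta_tsum_add_natCast_rpow_mul_pow (ha : 0 ≤ a) (hr : 0 ≤ r) :
    (fun x : ℝ ↦ ∑' m : ℕ, (a + m) ^ r * x ^ m) =Θ[𝓝[<] 1] fun x ↦ (1 - x) ^ (-(r + 1)) := by
  have hnear : ∀ᶠ x : ℝ in 𝓝[<] 1, x ∈ Set.Ico (1 / 2) 1 := Ico_mem_nhdsLT (by norm_num)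
  have hnonneg {x : ℝ} (hx : x ∈ Set.Ico (1 / 2) 1) :
      0 ≤ ∑' m : ℕ, (a + m) ^ r * x ^ m ∧ 0 ≤ (1 - x) ^ (-(r + 1)) := by
    have hx₀ : 0 ≤ x := by linarith [hx.1]
    exact ⟨tsum_nonneg fun m ↦ by positivity, Real.rpow_nonneg (sub_nonneg.2 hx.2.le) _⟩
  constructor
  · refine .of_bound (2 * (2 * r) ^ r * Real.exp (a / 2)) (hnear.mono fun x hx ↦ ?_)
    rw [Real.norm_of_nonneg (hnonneg hx).1, Real.norm_of_nonneg (hnonneg hx).2]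
    exact tsum_add_natCast_rpow_mul_pow_le ha hr (by linarith [hx.1]) hx.2
  · refine .of_bound ((1 / 4) ^ (r + 1))⁻¹ (hnear.mono fun x hx ↦ ?_)
    rw [Real.norm_of_nonneg (hnonneg hx).1, Real.norm_of_nonneg (hnonneg hx).2,
      le_inv_mul_iff₀ (by positivity)]
    exact le_tsum_add_natCast_rpow_mul_pow ha hr hx.1 hx.2

end PowerSeries

lemma tendsto_log_div_of_isTheta_exp {f : ℝ → ℝ} {μ : ℝ}
    (hf : f =Θ[atTop] fun t ↦ Real.exp (μ * t)) :
    Tendsto (fun t ↦ 1 / t * Real.log (f t)) atTop (𝓝 μ) := by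
  have hne : ∀ᶠ t in atTop, f t ≠ 0 := by
    filter_upwards [hf.eq_zero_iff] with t ht using ht.not.2 (Real.exp_ne_zero _)
  have hexp : (fun t ↦ Real.exp (Real.log (f t))) =Θ[atTop] f :=
    .of_norm_eventuallyEq_norm <| hne.mono fun t ht ↦ by
      simp only [Real.exp_log_eq_abs ht, norm_abs_eq_norm]
  have hbdd : IsBoundedUnder (· ≤ ·) atTop fun t ↦ |Real.log (f t) - μ * t| :=
    Real.isTheta_exp_comp_exp_comp.1 (hexp.trans hf)
  have herr : Tendsto (fun t ↦ t⁻¹ * (Real.log (f t) - μ * t) + μ) atTop (𝓝 μ) := by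
    simpa using (tendsto_inv_atTop_zero.zero_mul_isBoundedUnder_le hbdd).add_const μ
  refine herr.congr' ?_
  filter_upwards [eventually_ne_atTop 0] with t ht
  field_simp
  ring

section SobolevNorm

/-- The mode sequence `α₀ = β`, `αₙ = c z^(n-1)` for `n ≥ 1`; on `L(1)` it is used with `β = b`,
`c = bp + a` and `z = p`. -/
def modes (β c z : ℂ) (n : ℕ) : ℂ :=
  if n = 0 then β else c * z ^ (n - 1)

/-- The squared `H^s` norm `∑ (1+n)^(2s) |αₙ|²` of a mode sequence, with value `0` when the series
diverges. -/
noncomputable def sobolevNormSq (s : ℝ) (α : ℕ → ℂ) : ℝ :=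
  ∑' n : ℕ, ((1 : ℝ) + n) ^ (2 * s) * ‖α n‖ ^ 2

lemma sobolevNormSq_modes {s : ℝ} (hs : 0 ≤ s) (β c : ℂ) {z : ℂ} (hz : ‖z‖ < 1) :
    sobolevNormSq s (modes β c z) =
      ‖β‖ ^ 2 + ‖c‖ ^ 2 * ∑' m : ℕ, (2 + m : ℝ) ^ (2 * s) * (‖z‖ ^ 2) ^ m := by
  have hsum : Summable fun m : ℕ ↦ (2 + m : ℝ) ^ (2 * s) * (‖z‖ ^ 2) ^ m :=
    summable_add_natCast_rpow_mul_pow zero_le_two (by positivity) (sq_nonneg _)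
      (pow_lt_one₀ (norm_nonneg z) hz two_ne_zero)
  have hsucc (m : ℕ) : ((1 : ℝ) + (m + 1 : ℕ)) ^ (2 * s) * ‖modes β c z (m + 1)‖ ^ 2 =
      ‖c‖ ^ 2 * ((2 + m : ℝ) ^ (2 * s) * (‖z‖ ^ 2) ^ m) := by
    rw [modes, if_neg m.succ_ne_zero, Nat.add_sub_cancel, norm_mul, norm_pow, mul_pow,
      pow_right_comm, Nat.cast_add_one, add_comm (m : ℝ), ← add_assoc, one_add_one_eq_two]
    ring
  rw [sobolevNormSq, Summable.tsum_eq_zero_add, ← tsum_mul_left, tsum_congr hsucc]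
  · simp [modes]
  · exact (summable_nat_add_iff 1).1 ((hsum.mul_left (‖c‖ ^ 2)).congr fun m ↦ (hsucc m).symm)

variable {ι : Type*} {l : Filter ι} {β c z : ι → ℂ} {s : ℝ}

lemma isTheta_sq_mul_tsum (hs : 0 ≤ s) (hz : ∀ i, ‖z i‖ < 1)
    (hz_lim : Tendsto (fun i ↦ ‖z i‖ ^ 2) l (𝓝 1)) (hc : c =Θ[l] fun i ↦ 1 - ‖z i‖ ^ 2) :
    (fun i ↦ ‖c i‖ ^ 2 * ∑' m : ℕ, (2 + m : ℝ) ^ (2 * s) * (‖z i‖ ^ 2) ^ m) =Θ[l]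
      fun i ↦ (1 - ‖z i‖ ^ 2)⁻¹ ^ (2 * s - 1) := by
  have hlt (i : ι) : ‖z i‖ ^ 2 < 1 := pow_lt_one₀ (norm_nonneg _) (hz i) two_ne_zero
  have hz_left : Tendsto (fun i ↦ ‖z i‖ ^ 2) l (𝓝[<] 1) :=
    tendsto_nhdsWithin_iff.2 ⟨hz_lim, .of_forall hlt⟩
  obtain ⟨hseries_le, hseries_ge⟩ :=
    isTheta_tsum_add_natCast_rpow_mul_pow zero_le_two (by positivity : 0 ≤ 2 * s)
  have hseries : (fun i ↦ ∑' m : ℕ, (2 + m : ℝ) ^ (2 * s) * (‖z i‖ ^ 2) ^ m) =Θ[l]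
      fun i ↦ (1 - ‖z i‖ ^ 2) ^ (-(2 * s + 1)) :=
    ⟨hseries_le.comp_tendsto hz_left, hseries_ge.comp_tendsto hz_left⟩
  refine ((hc.norm_left.pow 2).mul hseries).trans_eventuallyEq (.of_forall fun i ↦ ?_)
  have hq : 0 < 1 - ‖z i‖ ^ 2 := sub_pos.2 (hlt i)
  beta_reduce
  rw [Real.inv_rpow hq.le, ← Real.rpow_neg hq.le, ← Real.rpow_natCast, ← Real.rpow_add hq]
  congr 1
  push_cast
  ring

lemma isTheta_sobolevNormSq_modes (hs : 1 / 2 < s) (hz : ∀ i, ‖z i‖ < 1)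
    (hz_lim : Tendsto (fun i ↦ ‖z i‖ ^ 2) l (𝓝 1)) (hβ : β =O[l] fun _ ↦ (1 : ℝ))
    (hc : c =Θ[l] fun i ↦ 1 - ‖z i‖ ^ 2) :
    (fun i ↦ sobolevNormSq s (modes (β i) (c i) (z i))) =Θ[l]
      fun i ↦ (1 - ‖z i‖ ^ 2)⁻¹ ^ (2 * s - 1) := by
  have hblowup : Tendsto (fun i ↦ (1 - ‖z i‖ ^ 2)⁻¹ ^ (2 * s - 1)) l atTop := by
    refine (tendsto_rpow_atTop (by linarith)).comp (tendsto_inv_nhdsGT_zero.comp ?_)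
    refine tendsto_nhdsWithin_iff.2 ⟨by simpa using hz_lim.const_sub 1, .of_forall fun i ↦ ?_⟩
    exact sub_pos.2 (pow_lt_one₀ (norm_nonneg _) (hz i) two_ne_zero)
  have hbdd : (fun i ↦ ‖β i‖ ^ 2) =O[l] fun _ ↦ (1 : ℝ) := by
    simpa using hβ.norm_left.pow 2
  have hhead : (fun i ↦ ‖β i‖ ^ 2) =o[l] fun i ↦ (1 - ‖z i‖ ^ 2)⁻¹ ^ (2 * s - 1) :=
    hbdd.trans_isLittleO
      ((isLittleO_const_left_of_ne one_ne_zero).2 (tendsto_norm_atTop_atTop.comp hblowup))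
  simp only [fun i ↦ sobolevNormSq_modes (by linarith : 0 ≤ s) (β i) (c i) (hz i)]
  exact hhead.add_isTheta (isTheta_sq_mul_tsum (by linarith) hz hz_lim hc)

end SobolevNorm

lemma tendsto_log_sobolevNormSq_modes {β c z : ℝ → ℂ} {s ω : ℝ} (hs : 1 / 2 < s) (hω : 0 < ω)
    (hz : ∀ t, ‖z t‖ < 1) (hβ : β =O[atTop] fun _ ↦ (1 : ℝ))
    (hc : c =Θ[atTop] fun t ↦ 1 - ‖z t‖ ^ 2)
    (hgrowth : (fun t ↦ (1 - ‖z t‖ ^ 2)⁻¹) =Θ[atTop] fun t ↦ Real.exp (ω * t)) :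
    Tendsto (fun t ↦ 1 / t * Real.log (sobolevNormSq s (modes (β t) (c t) (z t)))) atTop
      (𝓝 ((2 * s - 1) * ω)) := by
  have hdecay : Tendsto (fun t ↦ 1 - ‖z t‖ ^ 2) atTop (𝓝 0) := by
    have hexp : Tendsto (fun t ↦ (Real.exp (ω * t))⁻¹) atTop (𝓝 0) :=
      (Real.tendsto_exp_atTop.comp (tendsto_id.const_mul_atTop hω)).inv_tendsto_atTop
    simpa only [inv_inv] using hgrowth.inv.isBigO.trans_tendsto hexp
  have hz_lim : Tendsto (fun t ↦ ‖z t‖ ^ 2) atTop (𝓝 1) := by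
    simpa using hdecay.const_sub 1
  have hpos (t : ℝ) : 0 ≤ (1 - ‖z t‖ ^ 2)⁻¹ :=
    inv_nonneg.2 (sub_nonneg.2 (pow_le_one₀ (norm_nonneg _) (hz t).le))
  refine tendsto_log_div_of_isTheta_exp <|
    (isTheta_sobolevNormSq_modes hs hz hz_lim hβ hc).trans ?_
  refine (hgrowth.rpow (r := 2 * s - 1) (.of_forall hpos)
    (.of_forall fun t ↦ (Real.exp_pos _).le)).trans_eventuallyEq (.of_forall fun t ↦ ?_)
  simp only [← Real.exp_mul]
  ring_nf

section Reduction

/-- Solutions of the truncated Szegő system on `L(1)`, in its original unknowns. -/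
structure IsSolution (p b a : ℝ → ℂ) : Prop where
  differentiable_p : Differentiable ℝ p
  differentiable_b : Differentiable ℝ b
  differentiable_a : Differentiable ℝ a
  norm_p_lt_one (t : ℝ) : ‖p t‖ < 1
  equations (t : ℝ) :
    Complex.I * deriv p t =
      ((Ntr p b a t - (1 - ‖p t‖ ^ 2) * Etr p b a t : ℝ) : ℂ) * p t + a t * conj (b t) ∧
    Complex.I * deriv b t =
      ((Ntr p b a t + Etr p b a t : ℝ) : ℂ) * b t + (Etr p b a t : ℂ) * a t * conj (p t) ∧
    Complex.I * deriv a t =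
      ((Ntr p b a t - Etr p b a t : ℝ) : ℂ) * a t - ((Etr p b a t * ‖p t‖ ^ 2 : ℝ) : ℂ) * b t * p t

lemma isSolution_of_hasDerivAt {p b c : ℝ → ℂ} {E : ℝ → ℝ}
    (hE : ∀ t, E t = ‖c t‖ ^ 2 / (1 - ‖p t‖ ^ 2) ^ 2) (hp_lt : ∀ t, ‖p t‖ < 1)
    (hp : ∀ t, HasDerivAt p (-Complex.I * (c t * conj (b t))) t)
    (hb : ∀ t, HasDerivAt b
      (-Complex.I * ((‖b t‖ ^ 2 + 2 * (1 - ‖p t‖ ^ 2) * E t) * b t + E t * c t * conj (p t))) t)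
    (hc : ∀ t, HasDerivAt c
      (-Complex.I * (2 * ‖b t‖ ^ 2 * c t + 2 * (1 - ‖p t‖ ^ 2) * E t * b t * p t)) t) :
    IsSolution p b (c - b * p) := by
  have hEtr (t : ℝ) : Etr p b (c - b * p) t = E t := by simp [Etr, hE]
  have ha (t : ℝ) := (hc t).sub ((hb t).mul (hp t))
  refine ⟨fun t ↦ (hp t).differentiableAt, fun t ↦ (hb t).differentiableAt,
    fun t ↦ (ha t).differentiableAt, hp_lt, fun t ↦ ?_⟩
  rw [(hp t).deriv, (hb t).deriv, (ha t).deriv]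
  simp only [Ntr, hEtr, Pi.sub_apply, Pi.mul_apply]
  push_cast
  rw [← Complex.mul_conj' (b t), ← Complex.mul_conj' (p t)]
  refine ⟨?_, ?_, ?_⟩ <;> ring_nf <;> simp only [Complex.I_sq] <;> ring

end Reduction

section Ansatz

/-- The radial system left after separating phases: `σ` is the signed modulus of `p`, and
`-(3σ/4 + iτ)` is `b` with its phase removed. -/
structure IsRadialSolution (σ τ : ℝ → ℝ) : Prop where
  hasDerivAt_radius (t : ℝ) : HasDerivAt σ (τ t * (1 - σ t ^ 2)) t
  hasDerivAt_velocity (t : ℝ) : HasDerivAt τ (7 / 16 * σ t * (1 - σ t ^ 2)) t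
  energy (t : ℝ) : τ t ^ 2 = 1 / 2 + 7 / 16 * σ t ^ 2
  sq_radius_lt_one (t : ℝ) : σ t ^ 2 < 1

/-- The accumulated phase `∫₀ᵗ (1 - σ²)`, through which `p`, `b` and `c` rotate. -/
noncomputable def phase (σ : ℝ → ℝ) (t : ℝ) : ℝ := ∫ u in (0 : ℝ)..t, (1 - σ u ^ 2)

/-- The phase factor of `p`. -/
noncomputable def rotP (σ : ℝ → ℝ) (t : ℝ) : ℂ :=
  Complex.exp ((3 / 4 * phase σ t : ℝ) * Complex.I)

/-- The phase factor of `b`; the uniform rotation at rate `-3/2` is `-N`. -/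
noncomputable def rotB (σ : ℝ → ℝ) (t : ℝ) : ℂ :=
  Complex.exp ((-(3 / 2) * t - 1 / 4 * phase σ t : ℝ) * Complex.I)

/-- The component `p` of the solution built from `σ`. -/
noncomputable def solP (σ : ℝ → ℝ) (t : ℝ) : ℂ := σ t * rotP σ t

/-- The component `b` of the solution built from `σ` and `τ`. -/
noncomputable def solB (σ τ : ℝ → ℝ) (t : ℝ) : ℂ :=
  -(3 / 4 * σ t + τ t * Complex.I) * rotB σ t

/-- The combination `c = bp + a` of the solution built from `σ`. -/
noncomputable def solC (σ : ℝ → ℝ) (t : ℝ) : ℂ := (1 - σ t ^ 2 : ℝ) * (rotP σ t * rotB σ t)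

lemma hasDerivAt_exp_ofReal_mul_I {θ : ℝ → ℝ} {θ' t : ℝ} (hθ : HasDerivAt θ θ' t) :
    HasDerivAt (fun t ↦ Complex.exp (θ t * Complex.I))
      (Complex.exp (θ t * Complex.I) * (θ' * Complex.I)) t :=
  (hθ.ofReal_comp.mul_const Complex.I).cexp

lemma rotP_mul_conj (σ : ℝ → ℝ) (t : ℝ) : rotP σ t * conj (rotP σ t) = 1 := by
  rw [Complex.mul_conj', rotP, Complex.norm_exp_ofReal_mul_I, Complex.ofReal_one, one_pow]

lemma rotB_mul_conj (σ : ℝ → ℝ) (t : ℝ) : rotB σ t * conj (rotB σ t) = 1 := by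
  rw [Complex.mul_conj', rotB, Complex.norm_exp_ofReal_mul_I, Complex.ofReal_one, one_pow]

lemma norm_solP (σ : ℝ → ℝ) (t : ℝ) : ‖solP σ t‖ = |σ t| := by
  rw [solP, rotP, norm_mul, Complex.norm_exp_ofReal_mul_I, Complex.norm_real, mul_one,
    Real.norm_eq_abs]

lemma norm_sq_solP (σ : ℝ → ℝ) (t : ℝ) : ‖solP σ t‖ ^ 2 = σ t ^ 2 := by
  rw [norm_solP, sq_abs]

lemma ofReal_norm_sq_solP (σ : ℝ → ℝ) (t : ℝ) : (‖solP σ t‖ : ℂ) ^ 2 = σ t ^ 2 :=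
  mod_cast norm_sq_solP σ t

lemma norm_solC (σ : ℝ → ℝ) (t : ℝ) : ‖solC σ t‖ = |1 - σ t ^ 2| := by
  rw [solC, rotP, rotB, norm_mul, norm_mul, Complex.norm_exp_ofReal_mul_I,
    Complex.norm_exp_ofReal_mul_I, Complex.norm_real, mul_one, mul_one, Real.norm_eq_abs]

lemma isTheta_solC (σ : ℝ → ℝ) (l : Filter ℝ) : solC σ =Θ[l] fun t ↦ 1 - ‖solP σ t‖ ^ 2 :=
  .of_norm_eventuallyEq_norm <| .of_forall fun t ↦ by
    simp only [norm_solC, norm_sq_solP, Real.norm_eq_abs]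

namespace IsRadialSolution

variable {σ τ : ℝ → ℝ}

lemma hasDerivAt_phase (h : IsRadialSolution σ τ) (t : ℝ) :
    HasDerivAt (phase σ) (1 - σ t ^ 2) t := by
  have hσ : Continuous σ :=
    continuous_iff_continuousAt.2 fun t ↦ (h.hasDerivAt_radius t).continuousAt
  exact ((continuous_const.sub (hσ.pow 2)).integral_hasStrictDerivAt 0 t).hasDerivAt

lemma hasDerivAt_rotP (h : IsRadialSolution σ τ) (t : ℝ) :
    HasDerivAt (rotP σ) (rotP σ t * (3 / 4 * (1 - σ t ^ 2) * Complex.I)) t := by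
  refine (hasDerivAt_exp_ofReal_mul_I ((h.hasDerivAt_phase t).const_mul (3 / 4))).congr_deriv ?_
  simp [rotP]

lemma hasDerivAt_rotB (h : IsRadialSolution σ τ) (t : ℝ) :
    HasDerivAt (rotB σ) (rotB σ t * ((-3 / 2 - 1 / 4 * (1 - σ t ^ 2)) * Complex.I)) t := by
  refine (hasDerivAt_exp_ofReal_mul_I (((hasDerivAt_id t).const_mul (-(3 / 2))).sub
    ((h.hasDerivAt_phase t).const_mul (1 / 4)))).congr_deriv ?_
  simp [rotB, neg_div]

lemma norm_sq_solB (h : IsRadialSolution σ τ) (t : ℝ) : ‖solB σ τ t‖ ^ 2 = 1 / 2 + σ t ^ 2 := by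
  rw [solB, rotB, norm_mul, Complex.norm_exp_ofReal_mul_I, mul_one, norm_neg,
    ← Complex.normSq_eq_norm_sq]
  have hcast : (3 / 4 * σ t + τ t * Complex.I : ℂ) = (3 / 4 * σ t : ℝ) + τ t * Complex.I := by
    push_cast; rfl
  rw [hcast, Complex.normSq_add_mul_I, h.energy]
  ring

lemma ofReal_norm_sq_solB (h : IsRadialSolution σ τ) (t : ℝ) :
    (‖solB σ τ t‖ : ℂ) ^ 2 = 1 / 2 + σ t ^ 2 := by
  rw [← Complex.ofReal_pow, h.norm_sq_solB]
  push_cast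
  rfl

lemma isBigO_solB (h : IsRadialSolution σ τ) (l : Filter ℝ) : solB σ τ =O[l] fun _ ↦ (1 : ℝ) := by
  refine .of_bound 2 (.of_forall fun t ↦ ?_)
  rw [norm_one, mul_one]
  nlinarith [h.norm_sq_solB t, h.sq_radius_lt_one t]

lemma hasDerivAt_solP (h : IsRadialSolution σ τ) (t : ℝ) :
    HasDerivAt (solP σ) (-Complex.I * (solC σ t * conj (solB σ τ t))) t := by
  refine ((h.hasDerivAt_radius t).ofReal_comp.mul (h.hasDerivAt_rotP t)).congr_deriv ?_
  simp only [solC, solB, map_mul, map_neg, map_add, map_div₀, map_ofNat, Complex.conj_ofReal,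
    Complex.conj_I]
  push_cast
  linear_combination (-(1 - σ t ^ 2) * rotP σ t * (3 / 4 * σ t * Complex.I - τ t * Complex.I ^ 2)) *
    rotB_mul_conj σ t + (1 - σ t ^ 2) * rotP σ t * τ t * Complex.I_sq

lemma hasDerivAt_solB (h : IsRadialSolution σ τ) (t : ℝ) :
    HasDerivAt (solB σ τ) (-Complex.I * ((‖solB σ τ t‖ ^ 2 + 2 * (1 - ‖solP σ t‖ ^ 2)) * solB σ τ t
      + solC σ t * conj (solP σ t))) t := by
  have hcoeff : HasDerivAt (fun t ↦ -(3 / 4 * σ t + τ t * Complex.I)) _ t :=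
    (((h.hasDerivAt_radius t).ofReal_comp.const_mul (3 / 4 : ℂ)).add
      ((h.hasDerivAt_velocity t).ofReal_comp.mul_const Complex.I)).neg
  refine (hcoeff.mul (h.hasDerivAt_rotB t)).congr_deriv ?_
  rw [h.ofReal_norm_sq_solB, ofReal_norm_sq_solP]
  simp only [solC, solB, solP, map_mul, Complex.conj_ofReal]
  push_cast
  linear_combination (-(3 / 4) * τ t * (1 - σ t ^ 2) * rotB σ t) * Complex.I_sq +
    (rotB σ t * σ t * (1 - σ t ^ 2) * Complex.I) * rotP_mul_conj σ t

lemma hasDerivAt_solC (h : IsRadialSolution σ τ) (t : ℝ) :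
    HasDerivAt (solC σ) (-Complex.I * (2 * ‖solB σ τ t‖ ^ 2 * solC σ t
      + 2 * (1 - ‖solP σ t‖ ^ 2) * solB σ τ t * solP σ t)) t := by
  have hcoeff : HasDerivAt (fun t ↦ ((1 - σ t ^ 2 : ℝ) : ℂ)) _ t :=
    (((h.hasDerivAt_radius t).pow 2).const_sub 1).ofReal_comp
  refine (hcoeff.mul ((h.hasDerivAt_rotP t).mul (h.hasDerivAt_rotB t))).congr_deriv ?_
  rw [h.ofReal_norm_sq_solB, ofReal_norm_sq_solP]
  simp only [solC, solB, solP, Pi.mul_apply]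
  push_cast
  linear_combination (-2 * σ t * τ t * (1 - σ t ^ 2) * rotP σ t * rotB σ t) * Complex.I_sq

lemma norm_solP_lt_one (h : IsRadialSolution σ τ) (t : ℝ) : ‖solP σ t‖ < 1 := by
  rw [norm_solP, ← sq_lt_one_iff_abs_lt_one]
  exact h.sq_radius_lt_one t

theorem isSolution (h : IsRadialSolution σ τ) :
    IsSolution (solP σ) (solB σ τ) (solC σ - solB σ τ * solP σ) := by
  refine isSolution_of_hasDerivAt (E := 1) (fun t ↦ ?_) h.norm_solP_lt_one h.hasDerivAt_solP
    (fun t ↦ ?_) (fun t ↦ ?_)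
  · have hq : 1 - σ t ^ 2 ≠ 0 := (sub_pos.2 (h.sq_radius_lt_one t)).ne'
    rw [norm_solC, sq_abs, norm_sq_solP, Pi.one_apply, div_self (pow_ne_zero 2 hq)]
  · simpa using h.hasDerivAt_solB t
  · simpa using h.hasDerivAt_solC t

end IsRadialSolution

end Ansatz

section RadialDynamics

lemma one_sub_div_sqrt_one_add_sq_sq (x : ℝ) : 1 - (x / √(1 + x ^ 2)) ^ 2 = (1 + x ^ 2)⁻¹ := by
  rw [div_pow, Real.sq_sqrt (by positivity)]
  field_simp
  ring

lemma hasDerivAt_div_sqrt_one_add_sq {u x : ℝ → ℝ} {u' x' t : ℝ} (hu : HasDerivAt u u' t)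
    (hx : HasDerivAt x x' t) :
    HasDerivAt (fun t ↦ u t / √(1 + x t ^ 2))
      ((u' - u t * x t * x' / (1 + x t ^ 2)) / √(1 + x t ^ 2)) t := by
  have hpos : 0 < 1 + x t ^ 2 := by positivity
  have hsqrt : HasDerivAt (fun t ↦ √(1 + x t ^ 2)) (x t * x' / √(1 + x t ^ 2)) t := by
    refine (((hx.pow 2).const_add 1).sqrt hpos.ne').congr_deriv ?_
    rw [Pi.pow_apply, Nat.cast_ofNat, Nat.add_one_sub_one, pow_one, mul_assoc,
      mul_div_mul_left _ _ two_ne_zero]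
  refine (hu.div hsqrt (Real.sqrt_ne_zero'.2 hpos)).congr_deriv ?_
  field_simp
  rw [Real.sq_sqrt hpos.le]

-- Central projection `x ↦ x / √(1 + x²)` of the line onto `(-1, 1)` linearises the radial system.
lemma isRadialSolution_of_hyperbolic {x y : ℝ → ℝ} (hx : ∀ t, HasDerivAt x (y t) t)
    (hy : ∀ t, HasDerivAt y (15 / 16 * x t) t)
    (henergy : ∀ t, y t ^ 2 = 1 / 2 + 15 / 16 * x t ^ 2) :
    IsRadialSolution (fun t ↦ x t / √(1 + x t ^ 2)) (fun t ↦ y t / √(1 + x t ^ 2)) where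
  hasDerivAt_radius t := by
    refine (hasDerivAt_div_sqrt_one_add_sq (hx t) (hx t)).congr_deriv ?_
    rw [one_sub_div_sqrt_one_add_sq_sq]
    field_simp
    ring
  hasDerivAt_velocity t := by
    refine (hasDerivAt_div_sqrt_one_add_sq (hy t) (hx t)).congr_deriv ?_
    rw [one_sub_div_sqrt_one_add_sq_sq]
    field_simp
    linear_combination -16 * x t * henergy t
  energy t := by
    rw [div_pow, div_pow, Real.sq_sqrt (by positivity), henergy]
    field_simp
    ring
  sq_radius_lt_one t := by
    rw [← sub_pos, one_sub_div_sqrt_one_add_sq_sq]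
    positivity

lemma isTheta_sinh_exp : Real.sinh =Θ[atTop] Real.exp := by
  have hmain : (fun t ↦ 1 / 2 * Real.exp t) =Θ[atTop] Real.exp :=
    (isTheta_refl Real.exp atTop).const_mul_left (by norm_num)
  have hneg : (fun t ↦ -(1 / 2) * Real.exp (-t)) =o[atTop] Real.exp := by
    refine .const_mul_left (Real.isLittleO_exp_comp_exp_comp.2 ?_) _
    simpa using tendsto_id.atTop_add_atTop tendsto_id
  refine EventuallyEq.trans_isTheta (.of_forall fun t ↦ ?_) (hmain.add_isLittleO hneg)
  rw [Pi.add_apply, Real.sinh_eq]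
  ring

lemma isTheta_one_add_sq_sinh {k μ : ℝ} (hk : k ≠ 0) (hμ : 0 < μ) :
    (fun t ↦ 1 + (k * Real.sinh (μ * t)) ^ 2) =Θ[atTop] fun t ↦ Real.exp (2 * μ * t) := by
  have hμt : Tendsto (fun t ↦ μ * t) atTop atTop := tendsto_id.const_mul_atTop hμ
  have hsinh : (fun t ↦ Real.sinh (μ * t)) =Θ[atTop] fun t ↦ Real.exp (μ * t) :=
    ⟨isTheta_sinh_exp.1.comp_tendsto hμt, isTheta_sinh_exp.2.comp_tendsto hμt⟩
  have hsq : (fun t ↦ (k * Real.sinh (μ * t)) ^ 2) =Θ[atTop] fun t ↦ Real.exp (2 * μ * t) := by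
    refine ((hsinh.const_mul_left hk).pow 2).trans_eventuallyEq (.of_forall fun t ↦ ?_)
    simp only [← Real.exp_nat_mul]
    push_cast
    ring_nf
  exact (Real.isLittleO_one_exp_comp.2 (tendsto_id.const_mul_atTop (by positivity))).add_isTheta hsq

lemma exists_isRadialSolution :
    ∃ σ τ : ℝ → ℝ, IsRadialSolution σ τ ∧
      (fun t ↦ (1 - σ t ^ 2)⁻¹) =Θ[atTop] fun t ↦ Real.exp (√15 / 2 * t) := by
  have hlin (t : ℝ) : HasDerivAt (fun t ↦ √15 / 4 * t) (√15 / 4) t := by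
    simpa using (hasDerivAt_id t).const_mul (√15 / 4)
  have hx (t : ℝ) := (hlin t).sinh.const_mul √(8 / 15)
  have hy (t : ℝ) := ((hlin t).cosh.mul_const (√15 / 4)).const_mul √(8 / 15)
  refine ⟨_, _, isRadialSolution_of_hyperbolic hx (fun t ↦ (hy t).congr_deriv ?_) fun t ↦ ?_, ?_⟩
  · have h15 : √15 ^ 2 = 15 := Real.sq_sqrt (by norm_num)
    linear_combination (√(8 / 15) * Real.sinh (√15 / 4 * t) / 16) * h15
  · rw [mul_pow, mul_pow, mul_pow, div_pow, Real.cosh_sq, Real.sq_sqrt (by norm_num),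
      Real.sq_sqrt (by norm_num)]
    ring
  · simp only [one_sub_div_sqrt_one_add_sq_sq, inv_inv]
    convert isTheta_one_add_sq_sinh (k := √(8 / 15)) (μ := √15 / 4) (by positivity) (by positivity)
      using 3
    ring

end RadialDynamics

end TruncatedSzego

/-- There exists a solution of the truncated Szegő `L(1)` system whose `H^s`
Sobolev norms grow exponentially, at rate `(2s-1)ω/… `, for every `s > 1/2`. -/
theorem truncated_szego_exponential_sobolev_growth :
    ∃ (p b a : ℝ → ℂ) (ω : ℝ),
      Differentiable ℝ p ∧ Differentiable ℝ b ∧ Differentiable ℝ a ∧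
      (∀ t : ℝ, ‖p t‖ < 1) ∧
      (∀ t : ℝ,
        Complex.I * deriv p t =
          ((Ntr p b a t - (1 - ‖p t‖ ^ 2) * Etr p b a t : ℝ) : ℂ) * p t
            + a t * conj (b t) ∧
        Complex.I * deriv b t =
          ((Ntr p b a t + Etr p b a t : ℝ) : ℂ) * b t
            + (Etr p b a t : ℂ) * a t * conj (p t) ∧
        Complex.I * deriv a t =
          ((Ntr p b a t - Etr p b a t : ℝ) : ℂ) * a t
            - ((Etr p b a t * ‖p t‖ ^ 2 : ℝ) : ℂ) * b t * p t) ∧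
      0 < ω ∧
      (∀ s : ℝ, 1 / 2 < s →
        Tendsto
          (fun t : ℝ => (1 / t) * Real.log (∑' n : ℕ,
            ((1 : ℝ) + n) ^ (2 * s) *
              ‖(match n with
                | 0 => b t
                | Nat.succ m => (b t * p t + a t) * p t ^ m : ℂ)‖ ^ 2))
          atTop (𝓝 ((2 * s - 1) * ω))) := by
  obtain ⟨σ, τ, h, hgrowth⟩ := TruncatedSzego.exists_isRadialSolution
  have hsol := h.isSolution
  refine ⟨_, _, _, √15 / 2, hsol.differentiable_p, hsol.differentiable_b, hsol.differentiable_a,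
    hsol.norm_p_lt_one, hsol.equations, by positivity, fun s hs ↦ ?_⟩
  have hlim := TruncatedSzego.tendsto_log_sobolevNormSq_modes (ω := √15 / 2) hs (by positivity)
    h.norm_solP_lt_one (h.isBigO_solB atTop) (TruncatedSzego.isTheta_solC σ atTop)
    (by simpa only [TruncatedSzego.norm_sq_solP] using hgrowth)
  refine hlim.congr fun t ↦ ?_
  rw [TruncatedSzego.sobolevNormSq, Nat.cast_one]
  congr 2
  exact tsum_congr fun n ↦ by cases n <;> simp [TruncatedSzego.modes]
end

section
/- Let α : ℕ → ℂ be such that N := Σ_{n=0}^∞ |α_n|² and E := Σ_{n=0}^∞ n·|α_n|² are finite. Then the Hamiltonian of the truncated Szegő equation, H_tr := |α_0|⁴/4 + |α_0|²·Σ_{n=1}^∞ |α_n|² + Re( Σ_{n=2}^∞ Σ_{k=1}^{n−1} conj(α_0)·conj(α_n)·α_k·α_{n−k} ), satisfies H_tr ≥ −N·E (all the series appearing converge absolutely under these hypotheses). -/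
open ComplexConjugate

/-!
Split the Hamiltonian according to the mass `S = Σ_{n≥1} |α_n|²` outside the zero mode. Applying
`|uv| ≤ |u|² + |v|²/4` with `u = α₀ α_n` and `v = α_k α_{n-k}` bounds the modulus of the double
series by `|α₀|² Σ_{n≥2} (n-1)|α_n|² + S²/4`, because `u` is counted `n - 1` times for each `n`
and the squares `|v|²` form a Cauchy product. Since `Σ_{n≥2} (n-1)|α_n|² = E - S`, which in
particular gives `S ≤ E`, and `N = |α₀|² + S`, the bound follows.
-/

section NormBounds

variable {R : Type*} [NonUnitalSeminormedRing R]

theorem norm_mul_sum_le_card_mul_sq_add {ι : Type*} (s : Finset ι) (c : R) (f : ι → R) :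
    ‖c * ∑ i ∈ s, f i‖ ≤ s.card * ‖c‖ ^ 2 + (∑ i ∈ s, ‖f i‖ ^ 2) / 4 := by
  have norm_mul_le_sq_add (i : ι) : ‖c * f i‖ ≤ ‖c‖ ^ 2 + ‖f i‖ ^ 2 / 4 :=
    (norm_mul_le _ _).trans (by linarith [sq_nonneg (‖c‖ - ‖f i‖ / 2)])
  calc ‖c * ∑ i ∈ s, f i‖ = ‖∑ i ∈ s, c * f i‖ := by rw [Finset.mul_sum]
    _ ≤ ∑ i ∈ s, (‖c‖ ^ 2 + ‖f i‖ ^ 2 / 4) := norm_sum_le_of_le s fun i _ ↦ norm_mul_le_sq_add i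
    _ = s.card * ‖c‖ ^ 2 + (∑ i ∈ s, ‖f i‖ ^ 2) / 4 := by
      rw [Finset.sum_add_distrib, Finset.sum_const, nsmul_eq_mul, Finset.sum_div]

theorem norm_tsum_mul_cauchyProduct_le {c x y : ℕ → R} {C X Y : ℝ}
    (hc : HasSum (fun n : ℕ ↦ ((n : ℝ) + 1) * ‖c n‖ ^ 2) C)
    (hx : HasSum (fun n ↦ ‖x n‖ ^ 2) X) (hy : HasSum (fun n ↦ ‖y n‖ ^ 2) Y) :
    ‖∑' n, c n * ∑ k ∈ Finset.range (n + 1), x k * y (n - k)‖ ≤ C + X * Y / 4 := by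
  have hxy : HasSum
      (fun n ↦ ∑ k ∈ Finset.range (n + 1), ‖x k‖ ^ 2 * ‖y (n - k)‖ ^ 2) (X * Y) := by
    rw [← hx.tsum_eq, ← hy.tsum_eq]
    exact hasSum_sum_range_mul_of_summable_norm (f := fun k ↦ ‖x k‖ ^ 2)
      (g := fun k ↦ ‖y k‖ ^ 2) hx.summable.norm hy.summable.norm
  refine tsum_of_norm_bounded (hc.add (hxy.div_const 4)) fun n ↦ ?_
  calc ‖c n * ∑ k ∈ Finset.range (n + 1), x k * y (n - k)‖
      ≤ ((n : ℝ) + 1) * ‖c n‖ ^ 2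
          + (∑ k ∈ Finset.range (n + 1), ‖x k * y (n - k)‖ ^ 2) / 4 := by
        simpa using norm_mul_sum_le_card_mul_sq_add (Finset.range (n + 1)) (c n)
          fun k ↦ x k * y (n - k)
    _ ≤ ((n : ℝ) + 1) * ‖c n‖ ^ 2
          + (∑ k ∈ Finset.range (n + 1), ‖x k‖ ^ 2 * ‖y (n - k)‖ ^ 2) / 4 := by
        simp only [← mul_pow]
        gcongr
        exact norm_mul_le _ _

end NormBounds

theorem hasSum_add_one_mul_shift_two {R : Type*} [Ring R] [TopologicalSpace R]
    [IsTopologicalAddGroup R] {f : ℕ → R} {E S : R}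
    (hE : HasSum (fun n : ℕ ↦ (n : R) * f n) E) (hS : HasSum (fun n ↦ f (n + 1)) S) :
    HasSum (fun n : ℕ ↦ ((n : R) + 1) * f (n + 2)) (E - S) := by
  have hE_succ : HasSum (fun n : ℕ ↦ ((n : R) + 1) * f (n + 1)) E := by
    simpa using (hasSum_nat_add_iff' 1).2 hE
  have hdiff : HasSum (fun n : ℕ ↦ (n : R) * f (n + 1)) (E - S) := by
    simpa [add_mul] using hE_succ.sub hS
  simpa using (hasSum_nat_add_iff' 1).2 hdiff

theorem sum_range_mul_succ_mul_eq_mul_cauchyProduct {R : Type*} [NonUnitalSemiring R] (c : R)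
    (x : ℕ → R) (n : ℕ) :
    ∑ k ∈ Finset.range (n + 1), c * x (k + 1) * x (n + 1 - k) =
      c * ∑ k ∈ Finset.range (n + 1), x (k + 1) * x (n - k + 1) := by
  rw [Finset.mul_sum]
  refine Finset.sum_congr rfl fun k hk ↦ ?_
  rw [mul_assoc, Nat.sub_add_comm (Finset.mem_range_succ_iff.1 hk)]

/-- The Hamiltonian of the truncated Szegő equation,
`H_tr = |α₀|⁴/4 + |α₀|² Σ_{n≥1} |α_n|²
  + Re( Σ_{n≥2} Σ_{k=1}^{n-1} conj(α₀) conj(α_n) α_k α_{n-k} )`,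
is bounded below by `-N·E` whenever `N = Σ |α_n|²` and `E = Σ n|α_n|²` are finite.
(The outer series is indexed by `m = n - 2` and the inner by `j = k - 1`.) -/
theorem truncated_szego_hamiltonian_lower_bound (α : ℕ → ℂ) (N E : ℝ)
    (hN : Summable fun n : ℕ => ‖α n‖ ^ 2)
    (hE : Summable fun n : ℕ => (n : ℝ) * ‖α n‖ ^ 2)
    (hNdef : N = ∑' n : ℕ, ‖α n‖ ^ 2)
    (hEdef : E = ∑' n : ℕ, (n : ℝ) * ‖α n‖ ^ 2) :
    ‖α 0‖ ^ 4 / 4 + ‖α 0‖ ^ 2 * (∑' n : ℕ, ‖α (n + 1)‖ ^ 2)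
      + (∑' m : ℕ, ∑ j ∈ Finset.range (m + 1),
          conj (α 0) * conj (α (m + 2)) * α (j + 1) * α (m + 1 - j)).re
      ≥ -(N * E) := by
  set S := ∑' n : ℕ, ‖α (n + 1)‖ ^ 2
  have hS : HasSum (fun n ↦ ‖α (n + 1)‖ ^ 2) S := ((summable_nat_add_iff 1).2 hN).hasSum
  have hES : HasSum (fun n : ℕ ↦ ((n : ℝ) + 1) * ‖α (n + 2)‖ ^ 2) (E - S) :=
    hasSum_add_one_mul_shift_two (f := fun n ↦ ‖α n‖ ^ 2) (hEdef ▸ hE.hasSum) hS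
  have hS_nonneg : 0 ≤ S := hS.nonneg fun _ ↦ by positivity
  have hES_nonneg : 0 ≤ E - S := hES.nonneg fun _ ↦ by positivity
  have hN_eq : N = ‖α 0‖ ^ 2 + S := by rw [hNdef, hN.tsum_eq_zero_add]
  have hcoeff : HasSum (fun n : ℕ ↦ ((n : ℝ) + 1) * ‖conj (α 0) * conj (α (n + 2))‖ ^ 2)
      (‖α 0‖ ^ 2 * (E - S)) := by
    simpa only [norm_mul, RCLike.norm_conj, mul_pow, mul_left_comm] using hES.mul_left (‖α 0‖ ^ 2)
  simp only [sum_range_mul_succ_mul_eq_mul_cauchyProduct]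
  have hre := neg_le_of_abs_le <| (Complex.abs_re_le_norm _).trans <|
    norm_tsum_mul_cauchyProduct_le hcoeff hS hS
  calc -(N * E)
      ≤ ‖α 0‖ ^ 4 / 4 + ‖α 0‖ ^ 2 * S - (‖α 0‖ ^ 2 * (E - S) + S * S / 4) := by
        rw [hN_eq]
        linarith [mul_nonneg hS_nonneg hES_nonneg, mul_nonneg (sq_nonneg ‖α 0‖) hS_nonneg,
          mul_nonneg hS_nonneg hS_nonneg, pow_nonneg (norm_nonneg (α 0)) 4]
    _ ≤ _ := by linarith
end

section
/- For any complex numbers α_1, …, α_{n−1} and any integer n ≥ 2: | Σ_{k=1}^{n−1} α_k α_{n−k} |² ≤ Σ_{k=1}^{n−1} (2k−1)·|α_k|²·|α_{n−k}|². -/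
/-!
The triangle inequality and Cauchy–Schwarz bound the left-hand side by `n - 1` times
`∑ ‖α k‖² ‖α (n - k)‖²`, where `n - 1` is the number of terms. Since `‖α k‖² ‖α (n - k)‖²` is
invariant under `k ↦ n - k`, a weight may be replaced by its average with its reflection, and the
average of `2k - 1` and `2(n - k) - 1` is `n - 1`.
-/

open Finset

theorem sq_norm_sum_mul_le_card_mul_sum {ι R : Type*} [NonUnitalSeminormedRing R]
    (s : Finset ι) (a b : ι → R) :
    ‖∑ i ∈ s, a i * b i‖ ^ 2 ≤ #s * ∑ i ∈ s, ‖a i‖ ^ 2 * ‖b i‖ ^ 2 := by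
  have norm_sum_mul_le : ‖∑ i ∈ s, a i * b i‖ ≤ ∑ i ∈ s, ‖a i‖ * ‖b i‖ :=
    norm_sum_le_of_le s fun i _ ↦ norm_mul_le (a i) (b i)
  calc ‖∑ i ∈ s, a i * b i‖ ^ 2
      ≤ (∑ i ∈ s, ‖a i‖ * ‖b i‖) ^ 2 := by gcongr
    _ ≤ #s * ∑ i ∈ s, (‖a i‖ * ‖b i‖) ^ 2 := sq_sum_le_card_mul_sum_sq
    _ = #s * ∑ i ∈ s, ‖a i‖ ^ 2 * ‖b i‖ ^ 2 := by simp only [mul_pow]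

section Reflection

variable {ι : Type*} {s : Finset ι} {σ : ι → ι}

theorem two_nsmul_sum_mul_eq_mul_sum_of_bijOn {R : Type*} [NonUnitalNonAssocSemiring R]
    {w f : ι → R} {c : R} (hσ : Set.BijOn σ s s) (hf : ∀ i ∈ s, f (σ i) = f i)
    (hw : ∀ i ∈ s, w i + w (σ i) = c) :
    2 • ∑ i ∈ s, w i * f i = c * ∑ i ∈ s, f i := by
  have reflect : ∑ i ∈ s, w (σ i) * f i = ∑ i ∈ s, w i * f i :=
    sum_nbij σ hσ.mapsTo hσ.injOn hσ.surjOn fun i hi ↦ by rw [hf i hi]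
  calc 2 • ∑ i ∈ s, w i * f i
      = ∑ i ∈ s, w i * f i + ∑ i ∈ s, w (σ i) * f i := by rw [two_nsmul, reflect]
    _ = ∑ i ∈ s, (w i + w (σ i)) * f i := by simp only [add_mul, sum_add_distrib]
    _ = ∑ i ∈ s, c * f i := sum_congr rfl fun i hi ↦ by rw [hw i hi]
    _ = c * ∑ i ∈ s, f i := (mul_sum s f c).symm

theorem sq_norm_sum_mul_comp_le_sum_weight_mul {R : Type*} [NonUnitalSeminormedRing R]
    {w : ι → ℝ} (hmaps : Set.MapsTo σ s s) (hinv : Set.LeftInvOn σ σ s)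
    (hw : ∀ i ∈ s, w i + w (σ i) = 2 * #s) (a : ι → R) :
    ‖∑ i ∈ s, a i * a (σ i)‖ ^ 2 ≤ ∑ i ∈ s, w i * (‖a i‖ ^ 2 * ‖a (σ i)‖ ^ 2) := by
  have hσ : Set.BijOn σ s s := Set.InvOn.bijOn ⟨hinv, hinv⟩ hmaps hmaps
  have symmetric : ∀ i ∈ s,
      ‖a (σ i)‖ ^ 2 * ‖a (σ (σ i))‖ ^ 2 = ‖a i‖ ^ 2 * ‖a (σ i)‖ ^ 2 := fun i hi ↦ by
    rw [hinv hi, mul_comm]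
  have average := two_nsmul_sum_mul_eq_mul_sum_of_bijOn
    (f := fun i ↦ ‖a i‖ ^ 2 * ‖a (σ i)‖ ^ 2) hσ symmetric hw
  have cauchy_schwarz := sq_norm_sum_mul_le_card_mul_sum s a (a ∘ σ)
  simp only [Function.comp_apply] at cauchy_schwarz
  rw [nsmul_eq_mul, Nat.cast_ofNat, mul_assoc] at average
  linarith

end Reflection

theorem weighted_cauchy_schwarz_convolution_general {R : Type*} [NonUnitalSeminormedRing R]
    (n : ℕ) (α : ℕ → R) :
    ‖∑ k ∈ Icc 1 (n - 1), α k * α (n - k)‖ ^ 2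
      ≤ ∑ k ∈ Icc 1 (n - 1), (2 * (k : ℝ) - 1) * ‖α k‖ ^ 2 * ‖α (n - k)‖ ^ 2 := by
  have reflect_mem : Set.MapsTo (n - ·) (Icc 1 (n - 1) : Set ℕ) (Icc 1 (n - 1)) := fun k hk ↦ by
    simp only [coe_Icc, Set.mem_Icc] at hk ⊢
    lia
  have reflect_reflect : Set.LeftInvOn (n - ·) (n - ·) (Icc 1 (n - 1) : Set ℕ) := fun k hk ↦ by
    simp only [coe_Icc, Set.mem_Icc] at hk ⊢
    lia
  have weight_add_reflect : ∀ k ∈ Icc 1 (n - 1),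
      (2 * (k : ℝ) - 1) + (2 * ((n - k : ℕ) : ℝ) - 1) = 2 * #(Icc 1 (n - 1)) := fun k hk ↦ by
    rw [mem_Icc] at hk
    rw [Nat.card_Icc, Nat.add_sub_cancel, Nat.cast_sub (by lia), Nat.cast_pred (by lia)]
    ring
  simpa only [mul_assoc] using
    sq_norm_sum_mul_comp_le_sum_weight_mul reflect_mem reflect_reflect weight_add_reflect α

/-- Cauchy–Schwarz-type estimate: for any complex numbers `α₁, …, α_{n-1}` and `n ≥ 2`,
`|Σ_{k=1}^{n-1} α_k α_{n-k}|² ≤ Σ_{k=1}^{n-1} (2k-1) |α_k|² |α_{n-k}|²`. -/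
theorem weighted_cauchy_schwarz_convolution (n : ℕ) (hn : 2 ≤ n) (α : ℕ → ℂ) :
    ‖∑ k ∈ Finset.Icc 1 (n - 1), α k * α (n - k)‖ ^ 2
      ≤ ∑ k ∈ Finset.Icc 1 (n - 1),
          (2 * (k : ℝ) - 1) * ‖α k‖ ^ 2 * ‖α (n - k)‖ ^ 2 :=
  weighted_cauchy_schwarz_convolution_general n α
end

section
/- Let α : ℕ → ℂ be such that N := Σ_{n=0}^∞ |α_n|² and E := Σ_{n=0}^∞ n·|α_n|² are finite. Then Σ_{n=2}^∞ | Σ_{k=1}^{n−1} α_k α_{n−k} |² ≤ (2E − N + |α_0|²)·(N − |α_0|²) = 2NE − 2E|α_0|² − (N − |α_0|²)². -/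
/-!
By Cauchy–Schwarz, `|∑ α_k α_{n-k}|² ≤ (n - 1) ∑ |α_k|² |α_{n-k}|²`. The last sum is symmetric under
`k ↔ n - k`, and averaging `2k - 1` over this symmetry gives `n - 1`, so the constant factor may be
replaced by the weights `2k - 1`. The result is a Cauchy product, whose sum over `n` is
`(∑ (2k - 1)|α_k|²) (∑ |α_k|²)` with `k ≥ 1`. The shift `b_k = α_{k+1}` turns the weight into
`2k + 1`.
-/

open Finset

lemma sum_antidiagonal_two_mul_fst_add_one_mul_of_swap_eq {S : Type*} [NonAssocSemiring S]
    {f : ℕ × ℕ → S} (hf : ∀ p, f p.swap = f p) (m : ℕ) :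
    ∑ p ∈ antidiagonal m, (2 * (p.1 : S) + 1) * f p = (m + 1) * ∑ p ∈ antidiagonal m, f p := by
  have fst_eq_snd :
      ∑ p ∈ antidiagonal m, (p.1 : S) * f p = ∑ p ∈ antidiagonal m, (p.2 : S) * f p := by
    rw [← Nat.sum_antidiagonal_swap]
    simp only [hf, Prod.fst_swap]
  calc ∑ p ∈ antidiagonal m, (2 * (p.1 : S) + 1) * f p
      = ∑ p ∈ antidiagonal m, (p.1 : S) * f p + ∑ p ∈ antidiagonal m, (p.1 : S) * f p
          + ∑ p ∈ antidiagonal m, f p := by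
        simp only [two_mul, add_mul, one_mul, sum_add_distrib]
    _ = ∑ p ∈ antidiagonal m, ((p.1 + p.2 : ℕ) + 1 : S) * f p := by
        nth_rewrite 2 [fst_eq_snd]
        simp only [Nat.cast_add, add_mul, one_mul, sum_add_distrib]
    _ = (m + 1) * ∑ p ∈ antidiagonal m, f p := by
        rw [mul_sum]
        exact sum_congr rfl fun p hp => by rw [mem_antidiagonal.mp hp]

lemma sum_Icc_one_eq_sum_antidiagonal_succ {M : Type*} [AddCommMonoid M] (f : ℕ → ℕ → M) (m : ℕ) :
    ∑ k ∈ Icc 1 (m + 1), f k (m + 2 - k) = ∑ p ∈ antidiagonal m, f (p.1 + 1) (p.2 + 1) := by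
  rw [Nat.sum_antidiagonal_eq_sum_range_succ (fun i j => f (i + 1) (j + 1)), range_eq_Ico,
    ← Ico_add_one_right_eq_Icc, ← sum_Ico_add' _ 0 (m + 1) 1]
  refine sum_congr rfl fun k hk => ?_
  have hk' := mem_Ico.mp hk
  rw [show m + 2 - (k + 1) = m - k + 1 by omega]

section SelfConvolution

variable {R : Type*} [NonUnitalSeminormedRing R]

lemma norm_sum_antidiagonal_mul_self_sq_le (b : ℕ → R) (m : ℕ) :
    ‖∑ p ∈ antidiagonal m, b p.1 * b p.2‖ ^ 2
      ≤ ∑ p ∈ antidiagonal m, (2 * (p.1 : ℝ) + 1) * ‖b p.1‖ ^ 2 * ‖b p.2‖ ^ 2 :=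
  calc ‖∑ p ∈ antidiagonal m, b p.1 * b p.2‖ ^ 2
      ≤ (∑ p ∈ antidiagonal m, ‖b p.1‖ * ‖b p.2‖) ^ 2 := by
        gcongr
        exact norm_sum_le_of_le _ fun p _ => norm_mul_le _ _
    _ ≤ (m + 1) * ∑ p ∈ antidiagonal m, (‖b p.1‖ * ‖b p.2‖) ^ 2 := by
        simpa only [Nat.card_antidiagonal, Nat.cast_add_one] using
          sq_sum_le_card_mul_sum_sq (s := antidiagonal m) (f := fun p => ‖b p.1‖ * ‖b p.2‖)
    _ = ∑ p ∈ antidiagonal m, (2 * (p.1 : ℝ) + 1) * (‖b p.1‖ * ‖b p.2‖) ^ 2 :=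
        (sum_antidiagonal_two_mul_fst_add_one_mul_of_swap_eq
          (f := fun p => (‖b p.1‖ * ‖b p.2‖) ^ 2)
          (fun p => by rw [Prod.fst_swap, Prod.snd_swap, mul_comm]) m).symm
    _ = ∑ p ∈ antidiagonal m, (2 * (p.1 : ℝ) + 1) * ‖b p.1‖ ^ 2 * ‖b p.2‖ ^ 2 := by
        simp only [mul_pow, mul_assoc]

lemma tsum_norm_sum_antidiagonal_mul_self_sq_le {b : ℕ → R} {A B : ℝ}
    (hA : HasSum (fun n : ℕ => (2 * (n : ℝ) + 1) * ‖b n‖ ^ 2) A)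
    (hB : HasSum (fun n => ‖b n‖ ^ 2) B) :
    ∑' m : ℕ, ‖∑ p ∈ antidiagonal m, b p.1 * b p.2‖ ^ 2 ≤ A * B := by
  have cauchy_product : A * B
      = ∑' m : ℕ, ∑ p ∈ antidiagonal m, (2 * (p.1 : ℝ) + 1) * ‖b p.1‖ ^ 2 * ‖b p.2‖ ^ 2 := by
    rw [← hA.tsum_eq, ← hB.tsum_eq]
    exact tsum_mul_tsum_eq_tsum_sum_antidiagonal_of_summable_norm hA.summable.norm hB.summable.norm
  have summable_product : Summable fun m : ℕ =>
      ∑ p ∈ antidiagonal m, (2 * (p.1 : ℝ) + 1) * ‖b p.1‖ ^ 2 * ‖b p.2‖ ^ 2 :=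
    (summable_norm_sum_mul_antidiagonal_of_summable_norm
      hA.summable.norm hB.summable.norm).of_norm
  have pointwise := norm_sum_antidiagonal_mul_self_sq_le b
  rw [cauchy_product]
  exact (summable_product.of_nonneg_of_le (fun _ => sq_nonneg _) pointwise).tsum_le_tsum
    pointwise summable_product

theorem truncated_szego_convolution_sum_bound_general {α : ℕ → R} {N E : ℝ}
    (hN : HasSum (fun n => ‖α n‖ ^ 2) N)
    (hE : HasSum (fun n : ℕ => (n : ℝ) * ‖α n‖ ^ 2) E) :
    ∑' m : ℕ, ‖∑ k ∈ Icc 1 (m + 1), α k * α (m + 2 - k)‖ ^ 2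
      ≤ (2 * E - N + ‖α 0‖ ^ 2) * (N - ‖α 0‖ ^ 2) := by
  have hN_tail : HasSum (fun n => ‖α (n + 1)‖ ^ 2) (N - ‖α 0‖ ^ 2) := by
    simpa only [sum_range_one] using (hasSum_nat_add_iff' 1).mpr hN
  have hE_tail : HasSum (fun n : ℕ => ((n + 1 : ℕ) : ℝ) * ‖α (n + 1)‖ ^ 2) E := by
    simpa only [sum_range_one, Nat.cast_zero, zero_mul, sub_zero] using
      (hasSum_nat_add_iff' 1).mpr hE
  have hweighted_tail : HasSum (fun n : ℕ => (2 * (n : ℝ) + 1) * ‖α (n + 1)‖ ^ 2)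
      (2 * E - N + ‖α 0‖ ^ 2) := by
    rw [show 2 * E - N + ‖α 0‖ ^ 2 = 2 * E - (N - ‖α 0‖ ^ 2) by ring]
    refine ((hE_tail.mul_left 2).sub hN_tail).congr_fun fun n => ?_
    push_cast
    ring
  simpa only [sum_Icc_one_eq_sum_antidiagonal_succ fun i j => α i * α j] using
    tsum_norm_sum_antidiagonal_mul_self_sq_le hweighted_tail hN_tail

end SelfConvolution

/-- Summed estimate used in the lower bound for the truncated Szegő Hamiltonian:
`Σ_{n=2}^∞ |Σ_{k=1}^{n-1} α_k α_{n-k}|² ≤ (2E - N + |α₀|²)(N - |α₀|²)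
  = 2NE - 2E|α₀|² - (N - |α₀|²)²`,
where `N = Σ |α_n|²` and `E = Σ n|α_n|²`. (The outer series is indexed by `m = n - 2`.) -/
theorem truncated_szego_convolution_sum_bound (α : ℕ → ℂ) (N E : ℝ)
    (hN : Summable fun n : ℕ => ‖α n‖ ^ 2)
    (hE : Summable fun n : ℕ => (n : ℝ) * ‖α n‖ ^ 2)
    (hNdef : N = ∑' n : ℕ, ‖α n‖ ^ 2)
    (hEdef : E = ∑' n : ℕ, (n : ℝ) * ‖α n‖ ^ 2) :
    (∑' m : ℕ, ‖∑ k ∈ Finset.Icc 1 (m + 1), α k * α (m + 2 - k)‖ ^ 2)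
        ≤ (2 * E - N + ‖α 0‖ ^ 2) * (N - ‖α 0‖ ^ 2)
      ∧ (2 * E - N + ‖α 0‖ ^ 2) * (N - ‖α 0‖ ^ 2)
        = 2 * N * E - 2 * E * ‖α 0‖ ^ 2 - (N - ‖α 0‖ ^ 2) ^ 2 :=
  ⟨truncated_szego_convolution_sum_bound_general (hNdef ▸ hN.hasSum) (hEdef ▸ hE.hasSum), by ring⟩
end

section
/- Let β ∈ ℝ and let α : ℕ → ℂ satisfy Σ_{n=0}^∞ |α_n| < ∞ and α_n = 0 for every even n. Then: (i) for every even n (including n = 0), the right-hand side of the β-Szegő equation for mode n vanishes: Σ_{m=0}^∞ Σ_{k=0}^{n+m} conj(α_m)·α_k·α_{n+m−k} − β·Σ_{m=1}^∞ Σ_{k=1}^{n+m−1} conj(α_m)·α_k·α_{n+m−k} = 0; (ii) for every odd n, it equals (1−β) times the cubic Szegő right-hand side: Σ_{m=0}^∞ Σ_{k=0}^{n+m} conj(α_m)·α_k·α_{n+m−k} − β·Σ_{m=1}^∞ Σ_{k=1}^{n+m−1} conj(α_m)·α_k·α_{n+m−k} = (1−β)·Σ_{m=0}^∞ Σ_{k=0}^{n+m}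 conj(α_m)·α_k·α_{n+m−k}. Hence for β ≠ 1 the subspace of sequences supported on odd modes is an invariant manifold on which the β-Szegő equation reduces (after rescaling) to the cubic Szegő equation. -/
open ComplexConjugate

/-!
If `n + m = k + l` and three of the four modes lie in one residue class, so does the fourth. Hence
for `α` supported on the class of `r` modulo `d`, no resonant term reaches a mode outside that
class. If moreover `r ≢ 0`, then `α 0 = 0`, and the terms missing from the sum over positive modes
are zero: the two sums of the β-Szegő equation agree, which leaves `1 - β` times the cubic Szegő
sum. Odd modes are the case `d = 2`, `r = 1`.
-/

section Summands

variable {R : Type*} [CommSemiring R] [StarRing R] {α : ℕ → R} {d r n : ℕ}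

/-- The part of the cubic Szegő nonlinearity at mode `n` that carries the factor `conj (α m)`. The
resonance condition `n + m = k + l` is solved for `l = n + m - k`, where `k ≤ n + m`. -/
def szegoSummand (α : ℕ → R) (n m : ℕ) : R :=
  ∑ k ∈ Finset.range (n + m + 1), conj (α m) * α k * α (n + m - k)

/-- The part of the β-correction at mode `n` that carries the factor `conj (α (m + 1))`: only the
positive modes `m + 1`, `k` and `l = n + m + 1 - k` interact. The shift in `m` makes the sum over
`m ≥ 1` a sum over `ℕ`. -/
def positiveSzegoSummand (α : ℕ → R) (n m : ℕ) : R :=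
  ∑ k ∈ Finset.Icc 1 (n + m), conj (α (m + 1)) * α k * α (n + m + 1 - k)

theorem modEq_of_resonance {m k l : ℕ} (hres : n + m = k + l) (hm : m ≡ r [MOD d])
    (hk : k ≡ r [MOD d]) (hl : l ≡ r [MOD d]) : n ≡ r [MOD d] :=
  hm.add_right_cancel (hres ▸ hk.add hl)

theorem szegoSummand_eq_zero_of_not_modEq (hα : ∀ k, ¬k ≡ r [MOD d] → α k = 0)
    (hn : ¬n ≡ r [MOD d]) (m : ℕ) : szegoSummand α n m = 0 := by
  refine Finset.sum_eq_zero fun k hk ↦ ?_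
  have hres : n + m = k + (n + m - k) := by
    rw [Finset.mem_range] at hk
    omega
  by_cases hm : m ≡ r [MOD d]
  · by_cases hk : k ≡ r [MOD d]
    · have hl : ¬n + m - k ≡ r [MOD d] := fun hl ↦ hn (modEq_of_resonance hres hm hk hl)
      rw [hα _ hl, mul_zero]
    · rw [hα k hk, mul_zero, zero_mul]
  · rw [hα m hm, map_zero, zero_mul, zero_mul]

theorem szegoSummand_zero_right (h0 : α 0 = 0) (n : ℕ) : szegoSummand α n 0 = 0 := by
  simp [szegoSummand, h0]

theorem szegoSummand_succ_right (h0 : α 0 = 0) (n m : ℕ) :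
    szegoSummand α n (m + 1) = positiveSzegoSummand α n m := by
  refine (Finset.sum_subset (fun k hk ↦ ?_) fun k hk hk' ↦ ?_).symm
  · simp only [Finset.mem_Icc, Finset.mem_range] at hk ⊢
    omega
  · have hend : k = 0 ∨ k = n + m + 1 := by
      simp only [Finset.mem_Icc, Finset.mem_range] at hk hk'
      omega
    rcases hend with rfl | rfl <;> simp [← add_assoc, h0]

theorem szegoSummand_comp_succ (h0 : α 0 = 0) (n : ℕ) :
    szegoSummand α n ∘ Nat.succ = positiveSzegoSummand α n :=
  funext (szegoSummand_succ_right h0 n)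

theorem szegoSummand_eq_zero_of_notMem_range_succ (h0 : α 0 = 0) (n : ℕ) :
    ∀ m ∉ Set.range Nat.succ, szegoSummand α n m = 0
  | 0, _ => szegoSummand_zero_right h0 n
  | m + 1, hm => (hm ⟨m, rfl⟩).elim

variable [TopologicalSpace R]

theorem summable_positiveSzegoSummand_iff (h0 : α 0 = 0) (n : ℕ) :
    Summable (positiveSzegoSummand α n) ↔ Summable (szegoSummand α n) := by
  rw [← szegoSummand_comp_succ h0]
  exact Nat.succ_injective.summable_iff (szegoSummand_eq_zero_of_notMem_range_succ h0 n)

theorem tsum_positiveSzegoSummand (h0 : α 0 = 0) (n : ℕ) :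
    ∑' m, positiveSzegoSummand α n m = ∑' m, szegoSummand α n m := by
  rw [← szegoSummand_comp_succ h0]
  exact Nat.succ_injective.tsum_eq <|
    Function.support_subset_iff'.2 (szegoSummand_eq_zero_of_notMem_range_succ h0 n)

end Summands

theorem summable_szegoSummand {R : Type*} [NormedCommRing R] [StarRing R] [NormedStarGroup R]
    [CompleteSpace R] {α : ℕ → R} (hα : Summable fun n ↦ ‖α n‖) (n : ℕ) :
    Summable (szegoSummand α n) := by
  have hconj : Summable fun m ↦ ‖conj (α m)‖ := by
    simpa only [starRingEnd_apply, norm_star] using hα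
  have hconv : Summable fun j ↦ ‖∑ k ∈ Finset.range (j + 1), α k * α (j - k)‖ :=
    summable_norm_sum_mul_range_of_summable_norm hα hα
  have hdiag : Function.Injective fun m ↦ (m, n + m) := fun _ _ h ↦ congrArg Prod.fst h
  refine ((summable_mul_of_summable_norm hconj hconv).comp_injective hdiag).congr fun m ↦ ?_
  simp only [szegoSummand, Function.comp_apply, Finset.mul_sum, mul_assoc]

section BetaSzego

variable {R : Type*} [CommRing R] [StarRing R] [TopologicalSpace R]

/-- The right-hand side of the β-Szegő equation for mode `n`. Each of the two series is a `tsum`,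
so it has its intended value only where it converges. -/
noncomputable def betaSzegoRHS (β : R) (α : ℕ → R) (n : ℕ) : R :=
  (∑' m, szegoSummand α n m) - β * ∑' m, positiveSzegoSummand α n m

theorem betaSzegoRHS_eq_of_apply_zero {α : ℕ → R} (h0 : α 0 = 0) (β : R) (n : ℕ) :
    betaSzegoRHS β α n = (1 - β) * ∑' m, szegoSummand α n m := by
  rw [betaSzegoRHS, tsum_positiveSzegoSummand h0, sub_mul, one_mul]

theorem beta_szego_odd_modes_invariant_general {d r : ℕ} (hr : ¬0 ≡ r [MOD d]) (β : R) (α : ℕ → R)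
    (hα : ∀ n, ¬n ≡ r [MOD d] → α n = 0) :
    (∀ n, ¬n ≡ r [MOD d] → betaSzegoRHS β α n = 0) ∧
      ∀ n, Summable (szegoSummand α n) → Summable (positiveSzegoSummand α n) ∧
        betaSzegoRHS β α n = (1 - β) * ∑' m, szegoSummand α n m := by
  have h0 : α 0 = 0 := hα 0 hr
  refine ⟨fun n hn ↦ ?_, fun n hsum ↦ ⟨(summable_positiveSzegoSummand_iff h0 n).2 hsum,
    betaSzegoRHS_eq_of_apply_zero h0 β n⟩⟩
  rw [betaSzegoRHS_eq_of_apply_zero h0]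
  simp only [szegoSummand_eq_zero_of_not_modEq hα hn, tsum_zero, mul_zero]

end BetaSzego

theorem not_modEq_one_iff_even {n : ℕ} : ¬n ≡ 1 [MOD 2] ↔ Even n :=
  (not_congr Nat.odd_iff.symm).trans Nat.not_odd_iff_even

/-- On sequences supported on odd modes, the right-hand side of the β-Szegő equation
vanishes for even modes and equals `(1-β)` times the cubic Szegő right-hand side for
odd modes.  Here the β-Szegő right-hand side for mode `n` is
`Σ_{m≥0} Σ_{k=0}^{n+m} conj(α_m) α_k α_{n+m-k}
  - β Σ_{m≥1} Σ_{k=1}^{n+m-1} conj(α_m) α_k α_{n+m-k}`,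
the second (all-positive-index) sum being reindexed by `m ↦ m+1`. -/
theorem beta_szego_odd_modes_invariant (β : ℝ) (α : ℕ → ℂ)
    (hα : Summable fun n => ‖α n‖) (heven : ∀ n : ℕ, Even n → α n = 0) :
    (∀ n : ℕ, Even n →
      (∑' m : ℕ, ∑ k ∈ Finset.range (n + m + 1), conj (α m) * α k * α (n + m - k))
        - (β : ℂ) * ∑' m : ℕ, ∑ k ∈ Finset.Icc 1 (n + m),
            conj (α (m + 1)) * α k * α (n + m + 1 - k) = 0)
    ∧ (∀ n : ℕ, Odd n →
      (∑' m : ℕ, ∑ k ∈ Finset.range (n + m + 1), conj (α m) * α k * α (n + m - k))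
        - (β : ℂ) * ∑' m : ℕ, ∑ k ∈ Finset.Icc 1 (n + m),
            conj (α (m + 1)) * α k * α (n + m + 1 - k)
        = (1 - (β : ℂ)) *
            ∑' m : ℕ, ∑ k ∈ Finset.range (n + m + 1), conj (α m) * α k * α (n + m - k)) := by
  have h := beta_szego_odd_modes_invariant_general (not_modEq_one_iff_even.2 Even.zero) (β : ℂ) α
    fun n hn ↦ heven n (not_modEq_one_iff_even.1 hn)
  exact ⟨fun n hn ↦ h.1 n (not_modEq_one_iff_even.2 hn),
    fun n _ ↦ (h.2 n (summable_szegoSummand hα n)).2⟩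
end

section
/- Let I ⊆ ℝ be an interval and let p, b, a : I → ℂ be differentiable with |p(t)| < 1 for all t ∈ I, satisfying the system i p' = (N − (1−|p|²)E)p + a·conj(b), i b' = (N+E)b + E·a·conj(p), i a' = (N−E)a − E|p|²·b·p, where E(t) = |b(t)p(t)+a(t)|²/(1−|p(t)|²)² and N(t) = |b(t)|² + (1−|p(t)|²)E(t). Define α_0(t) = b(t) and α_n(t) = (b(t)p(t)+a(t))·p(t)^{n−1} for n ≥ 1. Then α solves the truncated Szegő equation: for all t ∈ I, i·α_0'(t) = Σ_{m=0}^∞ Σ_{k=0}^m conj(α_m)·α_k·α_{m−k}, and for every n ≥ 1, i·α_n'(t) = conj(α_0)·Σ_{k=0}^n α_k α_{n−k} + 2α_0·Σ_{m=1}^∞ conj(α_m)·α_{n+m} (all series converging absolutely since |p| < 1). -/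
/-!
In the variables `(b, c, p)` with `c = bp + a`, the ODE system gives `i p' = b̄ c` and
`i c' = 2 |b|² c + 2 b S p`, where `S = (1 - |p|²) E = |c|² / (1 - |p|²)`. Differentiating
`αₙ₊₁ = c pⁿ` then yields `b̄ (2 b c pⁿ + n c² pⁿ⁻¹) + 2 b S pⁿ⁺¹`. Here the bracket is the
convolution square of `α` at `n + 1`, and `S pⁿ⁺¹` is the geometric series `∑ ᾱₘ αₙ₊₁₊ₘ` over
`m ≥ 1`. Pairing the convolution square with `ᾱ` yields `|b|² b` plus multiples of a geometric
series and its derivative, and the total is the right-hand side of the equation for `b`.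
-/

open ComplexConjugate

/-- The sequence `α₀ = b`, `αₙ₊₁ = c pⁿ` of ratio `p` and leading coefficient `c`: the elements of
`L(1)`, parametrized by `c = bp + a` instead of `a` so that the sums in the truncated Szegő equation
can be computed for independent `b`, `c`, `p`. -/
def l1Ansatz {M : Type*} [Monoid M] (b c p : M) : ℕ → M
  | 0 => b
  | n + 1 => c * p ^ n

lemma map_l1Ansatz {M N F : Type*} [Monoid M] [Monoid N] [FunLike F M N] [MonoidHomClass F M N]
    (f : F) (b c p : M) (n : ℕ) :
    f (l1Ansatz b c p n) = l1Ansatz (f b) (f c) (f p) n := by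
  cases n <;> simp [l1Ansatz]

lemma sum_range_l1Ansatz_mul {R : Type*} [CommSemiring R] (b c p : R) (n : ℕ) :
    ∑ k ∈ Finset.range (n + 2), l1Ansatz b c p k * l1Ansatz b c p (n + 1 - k) =
      2 * b * c * p ^ n + n * c ^ 2 * p ^ (n - 1) := by
  have interior : ∀ k ∈ Finset.range n,
      l1Ansatz b c p (k + 1) * l1Ansatz b c p (n + 1 - (k + 1)) = c ^ 2 * p ^ (n - 1) := by
    intro k hk
    obtain ⟨d, rfl⟩ := Nat.exists_eq_add_of_lt (Finset.mem_range.1 hk)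
    have hd : k + d + 1 + 1 - (k + 1) = d + 1 := by lia
    simp only [hd, l1Ansatz, Nat.add_sub_cancel]
    ring
  rw [Finset.sum_range_succ, Finset.sum_range_succ', Finset.sum_congr rfl interior]
  simp only [Finset.sum_const, Finset.card_range, nsmul_eq_mul, l1Ansatz, Nat.sub_zero,
    Nat.sub_self]
  ring

section Series

variable {𝕜 : Type*} [NormedField 𝕜] {p q : 𝕜}

lemma hasSum_pow_mul_coe_mul_pow_pred (h : ‖q * p‖ < 1) :
    HasSum (fun n : ℕ ↦ q ^ n * (n * p ^ (n - 1))) (q / (1 - q * p) ^ 2) := by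
  rw [← hasSum_nat_add_iff' 1]
  convert! (hasSum_choose_mul_geometric_of_norm_lt_one 1 h).mul_left q using 1
  · ext n
    simp only [Nat.choose_one_right, Nat.add_sub_cancel]
    ring
  · simp [div_eq_mul_inv]

lemma hasSum_l1Ansatz_succ_mul (h : ‖q * p‖ < 1) (b c d e : 𝕜) (n : ℕ) :
    HasSum (fun m ↦ l1Ansatz d e q (m + 1) * l1Ansatz b c p (n + m + 1))
      (e * c / (1 - q * p) * p ^ n) := by
  convert! (hasSum_geometric_of_norm_lt_one h).mul_left (e * c * p ^ n) using 1
  · ext m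
    simp only [l1Ansatz]
    ring
  · ring

lemma hasSum_l1Ansatz_mul_sum_range (h : ‖q * p‖ < 1) (b c d e : 𝕜) :
    HasSum (fun m ↦ l1Ansatz d e q m *
        ∑ k ∈ Finset.range (m + 1), l1Ansatz b c p k * l1Ansatz b c p (m - k))
      (d * b ^ 2 + 2 * b * (e * c / (1 - q * p)) + c * q * (e * c / (1 - q * p) ^ 2)) := by
  rw [← hasSum_nat_add_iff' 1]
  convert! ((hasSum_geometric_of_norm_lt_one h).mul_left (2 * b * (e * c))).add
    ((hasSum_pow_mul_coe_mul_pow_pred h).mul_left (e * c ^ 2)) using 1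
  · ext m
    rw [sum_range_l1Ansatz_mul]
    simp only [l1Ansatz]
    ring
  · simp only [Finset.sum_range_one, zero_add, Nat.sub_zero, l1Ansatz]
    ring

end Series

lemma norm_conj_mul_self_lt_one {K : Type*} [RCLike K] {z : K} (h : ‖z‖ < 1) :
    ‖conj z * z‖ < 1 := by
  rw [norm_mul, RCLike.norm_conj]
  exact mul_lt_one_of_nonneg_of_lt_one_left (norm_nonneg z) h h.le

lemma mul_deriv_mul_pow {𝕜 A : Type*} [NontriviallyNormedField 𝕜] [NormedCommRing A]
    [NormedAlgebra 𝕜 A] {c p : 𝕜 → A} {x : 𝕜} {i β γ s : A}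
    (hc : DifferentiableAt 𝕜 c x) (hp : DifferentiableAt 𝕜 p x)
    (hp' : i * deriv p x = γ * c x)
    (hc' : i * deriv c x = 2 * γ * β * c x + 2 * β * s * p x) (n : ℕ) :
    i * deriv (fun y ↦ c y * p y ^ n) x =
      γ * (2 * β * c x * p x ^ n + n * c x ^ 2 * p x ^ (n - 1)) +
        2 * β * (s * p x ^ (n + 1)) := by
  have hderiv : deriv (fun y ↦ c y * p y ^ n) x =
      deriv c x * p x ^ n + c x * (n * p x ^ (n - 1) * deriv p x) :=
    (hc.hasDerivAt.mul (hp.hasDerivAt.pow n)).deriv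
  rw [hderiv]
  linear_combination p x ^ n * hc' + c x * n * p x ^ (n - 1) * hp'

lemma ofReal_Etr (p b a : ℝ → ℂ) (t : ℝ) :
    (Etr p b a t : ℂ) =
      conj (b t * p t + a t) * (b t * p t + a t) / (1 - conj (p t) * p t) ^ 2 := by
  simp only [Etr, Complex.conj_mul']
  push_cast
  rfl

lemma ofReal_Ntr (p b a : ℝ → ℂ) (t : ℝ) :
    (Ntr p b a t : ℂ) = conj (b t) * b t + (1 - conj (p t) * p t) * Etr p b a t := by
  simp only [Ntr, Complex.conj_mul']
  push_cast
  rfl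

section System

variable {p b a : ℝ → ℂ} {t : ℝ}

lemma ofReal_one_sub_norm_sq_mul_Etr (h : ‖p t‖ < 1) :
    (((1 - ‖p t‖ ^ 2) * Etr p b a t : ℝ) : ℂ) =
      conj (b t * p t + a t) * (b t * p t + a t) / (1 - conj (p t) * p t) := by
  have hne : 1 - conj (p t) * p t ≠ 0 := sub_ne_zero.2 fun h1 ↦ by
    simpa [← h1] using norm_conj_mul_self_lt_one h
  push_cast
  rw [← Complex.conj_mul', ofReal_Etr]
  field_simp

lemma hasSum_conj_l1Ansatz_succ_mul (h : ‖p t‖ < 1) (n : ℕ) :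
    HasSum (fun m ↦ conj (l1Ansatz (b t) (b t * p t + a t) (p t) (m + 1)) *
        l1Ansatz (b t) (b t * p t + a t) (p t) (n + m + 1))
      (((1 - ‖p t‖ ^ 2) * Etr p b a t : ℝ) * p t ^ n) := by
  simp only [map_l1Ansatz, ofReal_one_sub_norm_sq_mul_Etr h]
  exact hasSum_l1Ansatz_succ_mul (norm_conj_mul_self_lt_one h) ..

lemma hasSum_sum_range_conj_l1Ansatz_mul (h : ‖p t‖ < 1) :
    HasSum (fun m ↦ ∑ k ∈ Finset.range (m + 1),
        conj (l1Ansatz (b t) (b t * p t + a t) (p t) m) *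
          l1Ansatz (b t) (b t * p t + a t) (p t) k *
          l1Ansatz (b t) (b t * p t + a t) (p t) (m - k))
      ((Ntr p b a t + Etr p b a t : ℝ) * b t + Etr p b a t * a t * conj (p t)) := by
  simp only [mul_assoc, ← Finset.mul_sum, map_l1Ansatz]
  convert! hasSum_l1Ansatz_mul_sum_range (norm_conj_mul_self_lt_one h) (b t) (b t * p t + a t)
    (conj (b t)) (conj (b t * p t + a t)) using 1
  rw [← ofReal_Etr, ← ofReal_one_sub_norm_sq_mul_Etr h, Ntr]
  push_cast
  rw [← Complex.conj_mul', ← Complex.conj_mul']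
  ring

lemma I_mul_deriv_ratio
    (hp' : Complex.I * deriv p t =
      ((Ntr p b a t - (1 - ‖p t‖ ^ 2) * Etr p b a t : ℝ) : ℂ) * p t + a t * conj (b t)) :
    Complex.I * deriv p t = conj (b t) * (b t * p t + a t) := by
  rw [hp', Ntr, add_sub_cancel_right, Complex.ofReal_pow, ← Complex.conj_mul']
  ring

lemma I_mul_deriv_leadingCoeff (hp : DifferentiableAt ℝ p t) (hb : DifferentiableAt ℝ b t)
    (ha : DifferentiableAt ℝ a t)
    (hp' : Complex.I * deriv p t = conj (b t) * (b t * p t + a t))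
    (hb' : Complex.I * deriv b t =
      ((Ntr p b a t + Etr p b a t : ℝ) : ℂ) * b t + (Etr p b a t : ℂ) * a t * conj (p t))
    (ha' : Complex.I * deriv a t =
      ((Ntr p b a t - Etr p b a t : ℝ) : ℂ) * a t
        - ((Etr p b a t * ‖p t‖ ^ 2 : ℝ) : ℂ) * b t * p t) :
    Complex.I * deriv (fun τ ↦ b τ * p τ + a τ) t =
      2 * conj (b t) * b t * (b t * p t + a t) +
        2 * b t * ((1 - ‖p t‖ ^ 2) * Etr p b a t : ℝ) * p t := by
  have hderiv : deriv (fun τ ↦ b τ * p τ + a τ) t =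
      deriv b t * p t + b t * deriv p t + deriv a t :=
    ((hb.hasDerivAt.mul hp.hasDerivAt).add ha.hasDerivAt).deriv
  push_cast at hb' ha' ⊢
  rw [ofReal_Ntr, ← Complex.conj_mul'] at ha'
  rw [ofReal_Ntr] at hb'
  rw [hderiv, ← Complex.conj_mul']
  linear_combination p t * hb' + b t * hp' + ha'

end System

/-- If `p, b, a` solve the truncated Szegő `L(1)` ODE system on an interval `I`,
then the sequence `α₀ = b`, `α_n = (bp+a) p^{n-1}` (`n ≥ 1`) solves the truncated
Szegő equation on `I`. -/
theorem L1_ansatz_solves_truncated_szego (I : Set ℝ) (hI : I.OrdConnected)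
    (p b a : ℝ → ℂ)
    (hp : ∀ t ∈ I, DifferentiableAt ℝ p t)
    (hb : ∀ t ∈ I, DifferentiableAt ℝ b t)
    (ha : ∀ t ∈ I, DifferentiableAt ℝ a t)
    (hp1 : ∀ t ∈ I, ‖p t‖ < 1)
    (hode : ∀ t ∈ I,
      Complex.I * deriv p t =
        ((Ntr p b a t - (1 - ‖p t‖ ^ 2) * Etr p b a t : ℝ) : ℂ) * p t
          + a t * conj (b t) ∧
      Complex.I * deriv b t =
        ((Ntr p b a t + Etr p b a t : ℝ) : ℂ) * b t
          + (Etr p b a t : ℂ) * a t * conj (p t) ∧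
      Complex.I * deriv a t =
        ((Ntr p b a t - Etr p b a t : ℝ) : ℂ) * a t
          - ((Etr p b a t * ‖p t‖ ^ 2 : ℝ) : ℂ) * b t * p t)
    (α : ℕ → ℝ → ℂ)
    (hα0 : ∀ t : ℝ, α 0 t = b t)
    (hαn : ∀ (n : ℕ) (t : ℝ), α (n + 1) t = (b t * p t + a t) * p t ^ n) :
    ∀ t ∈ I,
      (Complex.I * deriv (α 0) t =
        ∑' m : ℕ, ∑ k ∈ Finset.range (m + 1), conj (α m t) * α k t * α (m - k) t)
      ∧ ∀ n : ℕ, 1 ≤ n →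
          Complex.I * deriv (α n) t =
            conj (α 0 t) * ∑ k ∈ Finset.range (n + 1), α k t * α (n - k) t
              + 2 * α 0 t * ∑' m : ℕ, conj (α (m + 1) t) * α (n + m + 1) t := by
  intro t ht
  obtain ⟨hp', hb', ha'⟩ := hode t ht
  obtain rfl : α = fun n τ ↦ l1Ansatz (b τ) (b τ * p τ + a τ) (p τ) n := by
    ext (_ | n) τ
    exacts [hα0 τ, hαn n τ]
  refine ⟨?_, fun n hn ↦ ?_⟩
  · rw [(hasSum_sum_range_conj_l1Ansatz_mul (hp1 t ht)).tsum_eq]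
    exact hb'
  · obtain ⟨n, rfl⟩ := Nat.exists_eq_add_of_le' hn
    rw [sum_range_l1Ansatz_mul, (hasSum_conj_l1Ansatz_succ_mul (hp1 t ht) (n + 1)).tsum_eq]
    have hratio := I_mul_deriv_ratio hp'
    have hcoeff := I_mul_deriv_leadingCoeff (hp t ht) (hb t ht) (ha t ht) hratio hb' ha'
    exact mul_deriv_mul_pow (((hb t ht).mul (hp t ht)).add (ha t ht)) (hp t ht)
      hratio hcoeff n
end

section
/- Let I ⊆ ℝ be an interval and let p, b, a : I → ℂ be differentiable with |p(t)| < 1 for all t ∈ I, satisfying i p' = (N − (1−|p|²)E)p + a·conj(b), i b' = (N+E)b + E·a·conj(p), i a' = (N−E)a − E|p|²·b·p, where E(t) = |b(t)p(t)+a(t)|²/(1−|p(t)|²)² and N(t) = |b(t)|² + (1−|p(t)|²)E(t). Then the functions t ↦ N(t) and t ↦ E(t) are constant on I. -/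
open ComplexConjugate

/-!
Put `r = 1 - |p|²` and `w = bp + a`. Since `N - rE = |b|²`, the system reads
`i p' = w b̄`, `i b' = (N + rE) b + E w p̄` and `i w' = 2|b|² w + 2rE bp`.
A real coefficient in front of the unknown itself only rotates it and leaves its modulus unchanged,
so with `S = Im (w b̄ p̄)` the squared moduli satisfy `(|p|²)' = 2S`, `(|b|²)' = 2ES` and
`(|w|²)' = -4rES`. Hence `(|w|²)' = E (r²)'`, while `|w|² = E r²`; so `E' = 0`, and then
`N' = (|b|²)' - E (|p|²)' = 0`.
-/

theorem eq_of_hasDerivWithinAt_zero {𝕜 G : Type*} [RCLike 𝕜] [NormedAddCommGroup G]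
    [NormedSpace 𝕜 G] {f : 𝕜 → G} {s : Set 𝕜} (hs : Convex ℝ s)
    (hf : ∀ x ∈ s, HasDerivWithinAt f 0 s x) {x y : 𝕜} (hx : x ∈ s) (hy : y ∈ s) :
    f x = f y := by
  have hle : ‖f x - f y‖ ≤ 0 * ‖x - y‖ :=
    hs.norm_image_sub_le_of_norm_hasDerivWithin_le hf (fun _ _ ↦ norm_zero.le) hy hx
  rwa [zero_mul, norm_le_zero_iff, sub_eq_zero] at hle

theorem hasDerivWithinAt_norm_sq_of_I_mul_eq {f : ℝ → ℂ} {f' g : ℂ} {c : ℝ} {s : Set ℝ} {t : ℝ}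
    (hf : HasDerivWithinAt f f' s t) (hf' : Complex.I * f' = c * f t + g) :
    HasDerivWithinAt (fun x ↦ ‖f x‖ ^ 2) (2 * (g * conj (f t)).im) s t := by
  have him : (f' * conj (f t)).re = (g * conj (f t)).im := by
    calc (f' * conj (f t)).re
        = (Complex.I * f' * conj (f t)).im := by rw [mul_assoc, Complex.I_mul_im]
      _ = ((c * ‖f t‖ ^ 2 : ℝ) + g * conj (f t)).im := by
          rw [hf', add_mul, mul_assoc, Complex.mul_conj', Complex.ofReal_mul, Complex.ofReal_pow]
      _ = (g * conj (f t)).im := by rw [Complex.add_im, Complex.ofReal_im, zero_add]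
  refine hf.norm_sq.congr_deriv ?_
  rw [Complex.inner, him]

/-- The truncated Szegő system on `L(1)` at time `t`: the functions `p`, `b`, `a` have derivatives
`p'`, `b'`, `a'` within `s` at `t`, and these satisfy the three equations. Derivatives are taken
within `s` so that they are one-sided at the endpoints of an interval. -/
structure HasTruncatedSzegoDerivWithinAt (p b a : ℝ → ℂ) (p' b' a' : ℂ) (s : Set ℝ) (t : ℝ) :
    Prop where
  hasDerivWithinAt_p : HasDerivWithinAt p p' s t
  hasDerivWithinAt_b : HasDerivWithinAt b b' s t
  hasDerivWithinAt_a : HasDerivWithinAt a a' s t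
  ode_p : Complex.I * p' =
    ((Ntr p b a t - (1 - ‖p t‖ ^ 2) * Etr p b a t : ℝ) : ℂ) * p t + a t * conj (b t)
  ode_b : Complex.I * b' =
    ((Ntr p b a t + Etr p b a t : ℝ) : ℂ) * b t + (Etr p b a t : ℂ) * a t * conj (p t)
  ode_a : Complex.I * a' =
    ((Ntr p b a t - Etr p b a t : ℝ) : ℂ) * a t
      - ((Etr p b a t * ‖p t‖ ^ 2 : ℝ) : ℂ) * b t * p t

/-- The quantity `S = Im ((bp + a) conj (bp))`: the time derivatives of `|p|²`, `|b|²` and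
`|bp + a|²` along the truncated Szegő system are all real multiples of it. -/
noncomputable def szegoFlux (p b a : ℝ → ℂ) (t : ℝ) : ℝ :=
  ((b t * p t + a t) * conj (b t * p t)).im

namespace HasTruncatedSzegoDerivWithinAt

variable {p b a : ℝ → ℂ} {p' b' a' : ℂ} {s : Set ℝ} {t : ℝ}

theorem I_mul_p'_eq (h : HasTruncatedSzegoDerivWithinAt p b a p' b' a' s t) :
    Complex.I * p' = (b t * p t + a t) * conj (b t) := by
  rw [h.ode_p, Ntr, add_sub_cancel_right, Complex.ofReal_pow, ← Complex.mul_conj']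
  ring

theorem I_mul_b'_eq (h : HasTruncatedSzegoDerivWithinAt p b a p' b' a' s t) :
    Complex.I * b' = ((Ntr p b a t + (1 - ‖p t‖ ^ 2) * Etr p b a t : ℝ) : ℂ) * b t
      + Etr p b a t * ((b t * p t + a t) * conj (p t)) := by
  rw [h.ode_b]
  push_cast
  rw [← Complex.mul_conj']
  ring

theorem I_mul_deriv_mul_add_eq (h : HasTruncatedSzegoDerivWithinAt p b a p' b' a' s t) :
    Complex.I * (b' * p t + b t * p' + a') =
      ((2 * ‖b t‖ ^ 2 : ℝ) : ℂ) * (b t * p t + a t)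
        + ((2 * (1 - ‖p t‖ ^ 2) * Etr p b a t : ℝ) : ℂ) * (b t * p t) := by
  have hdistrib : Complex.I * (b' * p t + b t * p' + a') =
      Complex.I * b' * p t + b t * (Complex.I * p') + Complex.I * a' := by ring
  rw [hdistrib, h.ode_b, h.I_mul_p'_eq, h.ode_a, Ntr]
  push_cast
  rw [← Complex.mul_conj', ← Complex.mul_conj']
  ring

theorem hasDerivWithinAt_norm_sq_p (h : HasTruncatedSzegoDerivWithinAt p b a p' b' a' s t) :
    HasDerivWithinAt (fun x ↦ ‖p x‖ ^ 2) (2 * szegoFlux p b a t) s t := by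
  have hp' : Complex.I * p' = (0 : ℝ) * p t + (b t * p t + a t) * conj (b t) := by
    rw [h.I_mul_p'_eq, Complex.ofReal_zero, zero_mul, zero_add]
  refine (hasDerivWithinAt_norm_sq_of_I_mul_eq h.hasDerivWithinAt_p hp').congr_deriv ?_
  rw [szegoFlux, map_mul, mul_assoc]

theorem hasDerivWithinAt_norm_sq_b (h : HasTruncatedSzegoDerivWithinAt p b a p' b' a' s t) :
    HasDerivWithinAt (fun x ↦ ‖b x‖ ^ 2) (2 * Etr p b a t * szegoFlux p b a t) s t := by
  refine (hasDerivWithinAt_norm_sq_of_I_mul_eq h.hasDerivWithinAt_b h.I_mul_b'_eq).congr_deriv ?_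
  rw [szegoFlux, map_mul, mul_assoc, mul_assoc, Complex.im_ofReal_mul, mul_assoc,
    mul_comm (conj (p t))]

theorem hasDerivWithinAt_norm_sq_mul_add
    (h : HasTruncatedSzegoDerivWithinAt p b a p' b' a' s t) :
    HasDerivWithinAt (fun x ↦ ‖b x * p x + a x‖ ^ 2)
      (-4 * (1 - ‖p t‖ ^ 2) * Etr p b a t * szegoFlux p b a t) s t := by
  have hw : HasDerivWithinAt (fun x ↦ b x * p x + a x) (b' * p t + b t * p' + a') s t :=
    (h.hasDerivWithinAt_b.mul h.hasDerivWithinAt_p).add h.hasDerivWithinAt_a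
  have hflux : (b t * p t * conj (b t * p t + a t)).im = -szegoFlux p b a t := by
    rw [szegoFlux, ← Complex.conj_im, map_mul, Complex.conj_conj, mul_comm]
  refine (hasDerivWithinAt_norm_sq_of_I_mul_eq hw h.I_mul_deriv_mul_add_eq).congr_deriv ?_
  rw [mul_assoc, Complex.im_ofReal_mul, hflux]
  ring

theorem hasDerivWithinAt_one_sub_norm_sq_p
    (h : HasTruncatedSzegoDerivWithinAt p b a p' b' a' s t) :
    HasDerivWithinAt (fun x ↦ 1 - ‖p x‖ ^ 2) (-(2 * szegoFlux p b a t)) s t :=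
  h.hasDerivWithinAt_norm_sq_p.const_sub 1

theorem hasDerivWithinAt_Etr (h : HasTruncatedSzegoDerivWithinAt p b a p' b' a' s t)
    (hp : ‖p t‖ ≠ 1) : HasDerivWithinAt (Etr p b a) 0 s t := by
  have hr : 1 - ‖p t‖ ^ 2 ≠ 0 := by
    rwa [sub_ne_zero, ne_comm, Ne, pow_eq_one_iff_of_nonneg (norm_nonneg _) two_ne_zero]
  have hE : ‖b t * p t + a t‖ ^ 2 = Etr p b a t * (1 - ‖p t‖ ^ 2) ^ 2 :=
    (div_mul_cancel₀ _ (pow_ne_zero 2 hr)).symm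
  refine (h.hasDerivWithinAt_norm_sq_mul_add.fun_div
    (h.hasDerivWithinAt_one_sub_norm_sq_p.fun_pow 2) (pow_ne_zero 2 hr)).congr_deriv ?_
  refine div_eq_zero_iff.mpr (.inl ?_)
  rw [hE]
  ring

theorem hasDerivWithinAt_Ntr (h : HasTruncatedSzegoDerivWithinAt p b a p' b' a' s t)
    (hp : ‖p t‖ ≠ 1) : HasDerivWithinAt (Ntr p b a) 0 s t := by
  refine (h.hasDerivWithinAt_norm_sq_b.add
    (h.hasDerivWithinAt_one_sub_norm_sq_p.mul (h.hasDerivWithinAt_Etr hp))).congr_deriv ?_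
  ring

end HasTruncatedSzegoDerivWithinAt

theorem truncated_szego_L1_N_E_conserved_general {I : Set ℝ} (hI : Convex ℝ I)
    {p b a p' b' a' : ℝ → ℂ}
    (h : ∀ t ∈ I, HasTruncatedSzegoDerivWithinAt p b a (p' t) (b' t) (a' t) I t)
    (hp : ∀ t ∈ I, ‖p t‖ ≠ 1) :
    ∀ t ∈ I, ∀ t' ∈ I, Ntr p b a t = Ntr p b a t' ∧ Etr p b a t = Etr p b a t' :=
  fun _ ht _ ht' ↦
    ⟨eq_of_hasDerivWithinAt_zero hI (fun x hx ↦ (h x hx).hasDerivWithinAt_Ntr (hp x hx)) ht ht',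
      eq_of_hasDerivWithinAt_zero hI (fun x hx ↦ (h x hx).hasDerivWithinAt_Etr (hp x hx)) ht ht'⟩

/-- Along solutions of the truncated Szegő `L(1)` ODE system on an interval `I`,
the quantities `N` and `E` are constant. -/
theorem truncated_szego_L1_N_E_conserved (I : Set ℝ) (hI : I.OrdConnected)
    (p b a : ℝ → ℂ)
    (hp : ∀ t ∈ I, DifferentiableAt ℝ p t)
    (hb : ∀ t ∈ I, DifferentiableAt ℝ b t)
    (ha : ∀ t ∈ I, DifferentiableAt ℝ a t)
    (hp1 : ∀ t ∈ I, ‖p t‖ < 1)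
    (hode : ∀ t ∈ I,
      Complex.I * deriv p t =
        ((Ntr p b a t - (1 - ‖p t‖ ^ 2) * Etr p b a t : ℝ) : ℂ) * p t
          + a t * conj (b t) ∧
      Complex.I * deriv b t =
        ((Ntr p b a t + Etr p b a t : ℝ) : ℂ) * b t
          + (Etr p b a t : ℂ) * a t * conj (p t) ∧
      Complex.I * deriv a t =
        ((Ntr p b a t - Etr p b a t : ℝ) : ℂ) * a t
          - ((Etr p b a t * ‖p t‖ ^ 2 : ℝ) : ℂ) * b t * p t) :
    ∀ t ∈ I, ∀ t' ∈ I,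
      Ntr p b a t = Ntr p b a t' ∧ Etr p b a t = Etr p b a t' := by
  exact truncated_szego_L1_N_E_conserved_general hI.convex
    (fun t ht ↦ ⟨(hp t ht).hasDerivAt.hasDerivWithinAt, (hb t ht).hasDerivAt.hasDerivWithinAt,
      (ha t ht).hasDerivAt.hasDerivWithinAt, (hode t ht).1, (hode t ht).2.1, (hode t ht).2.2⟩)
    fun t ht ↦ (hp1 t ht).ne
end

section
/- Let b, a, p ∈ ℂ with |p| < 1, and define α_0 = b, α_n = (bp+a)p^{n−1} for n ≥ 1, E = |bp+a|²/(1−|p|²)², N = |b|² + (1−|p|²)E, and S = (N+E)|p|² + (E/2)|p|⁴ + 2Re(a·conj(b)·conj(p)). Then the truncated Szegő Hamiltonian evaluated on this sequence, H_tr = |α_0|⁴/4 + |α_0|²·Σ_{n=1}^∞ |α_n|² + Re( Σ_{n=2}^∞ Σ_{k=1}^{n−1} conj(α_0)·conj(α_n)·α_k·α_{n−k} ), equals (1/4)(N² + 2EN − 3E² + 2ES). -/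
open ComplexConjugate

/-!
Off the zeroth mode the sequence is geometric, so each inner sum of the cubic term has `m + 1` equal
summands, and both series are summed by `∑ xᵐ = (1 - x)⁻¹` and `∑ (m + 1) xᵐ = (1 - x)⁻²` at
`x = |p|²`. Hence `|α₀|² ∑ |αₙ|² = |b|² (1 - |p|²) E`, and the cubic series is
`E * conj b * conj p * (b * p + a)`, whose real part supplies the term `Re (a * conj b * conj p)`
of `S`.
-/

theorem hasSum_norm_mul_pow_sq {K : Type*} [NormedDivisionRing K] (c : K) {r : K} (hr : ‖r‖ < 1) :
    HasSum (fun n : ℕ => ‖c * r ^ n‖ ^ 2) (‖c‖ ^ 2 / (1 - ‖r‖ ^ 2)) := by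
  have h_sq : ‖r‖ ^ 2 < 1 := pow_lt_one₀ (norm_nonneg r) hr two_ne_zero
  simpa only [norm_mul, norm_pow, mul_pow, pow_right_comm, div_eq_mul_inv] using
    (hasSum_geometric_of_lt_one (sq_nonneg ‖r‖) h_sq).mul_left (‖c‖ ^ 2)

theorem sum_range_mul_pow_mul_mul_pow_sub {R : Type*} [CommSemiring R] (c d r : R) (m : ℕ) :
    ∑ j ∈ Finset.range (m + 1), c * r ^ j * (d * r ^ (m - j)) = (m + 1) * (c * d * r ^ m) := by
  have h_const : ∀ j ∈ Finset.range (m + 1),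
      c * r ^ j * (d * r ^ (m - j)) = c * d * r ^ m := fun j hj => by
    rw [mul_mul_mul_comm, pow_mul_pow_sub r (Finset.mem_range_succ_iff.mp hj)]
  rw [Finset.sum_congr rfl h_const, Finset.sum_const, Finset.card_range, nsmul_eq_mul,
    Nat.cast_succ]

theorem hasSum_succ_mul_geometric {K : Type*} [NormedDivisionRing K] {x : K} (hx : ‖x‖ < 1) :
    HasSum (fun m : ℕ => (m + 1 : K) * x ^ m) (1 / (1 - x) ^ 2) := by
  simpa using hasSum_choose_mul_geometric_of_norm_lt_one 1 hx

section RCLike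

variable {K : Type*} [RCLike K]

theorem sum_range_mul_conj_geometric (z c r : K) (m : ℕ) :
    ∑ j ∈ Finset.range (m + 1), z * conj (c * r ^ (m + 1)) * (c * r ^ j) * (c * r ^ (m - j))
      = (‖c‖ : K) ^ 2 * (z * conj r * c) * ((m + 1) * ((‖r‖ : K) ^ 2) ^ m) := by
  simp only [mul_assoc (z * conj (c * r ^ (m + 1))), ← Finset.mul_sum,
    sum_range_mul_pow_mul_mul_pow_sub]
  rw [← RCLike.conj_mul, ← RCLike.conj_mul, map_mul, map_pow]
  ring

theorem hasSum_sum_range_mul_conj_geometric (z c : K) {r : K} (hr : ‖r‖ < 1) :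
    HasSum (fun m : ℕ => ∑ j ∈ Finset.range (m + 1),
        z * conj (c * r ^ (m + 1)) * (c * r ^ j) * (c * r ^ (m - j)))
      (((‖c‖ ^ 2 / (1 - ‖r‖ ^ 2) ^ 2 : ℝ) : K) * (z * conj r * c)) := by
  have h_sq : ‖(‖r‖ : K) ^ 2‖ < 1 := by
    simpa using pow_lt_one₀ (norm_nonneg r) hr two_ne_zero
  have h_value : ((‖c‖ ^ 2 / (1 - ‖r‖ ^ 2) ^ 2 : ℝ) : K) * (z * conj r * c)
      = (‖c‖ : K) ^ 2 * (z * conj r * c) * (1 / (1 - (‖r‖ : K) ^ 2) ^ 2) := by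
    push_cast
    ring
  simp only [sum_range_mul_conj_geometric]
  rw [h_value]
  exact (hasSum_succ_mul_geometric h_sq).mul_left _

theorem re_conj_mul_conj_mul_mul_add (b a p : K) :
    RCLike.re (conj b * conj p * (b * p + a))
      = ‖b‖ ^ 2 * ‖p‖ ^ 2 + RCLike.re (a * conj b * conj p) := by
  have h_expand : conj b * conj p * (b * p + a)
      = ((‖b‖ ^ 2 * ‖p‖ ^ 2 : ℝ) : K) + a * conj b * conj p := by
    push_cast
    rw [← RCLike.conj_mul, ← RCLike.conj_mul]
    ring
  rw [h_expand, map_add, RCLike.ofReal_re]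

end RCLike

/-- On the manifold `L(1)` (`α₀ = b`, `α_n = (bp+a)p^{n-1}` for `n ≥ 1`, `|p| < 1`),
the truncated Szegő Hamiltonian
`H_tr = |α₀|⁴/4 + |α₀|² Σ_{n≥1}|α_n|²
  + Re( Σ_{n≥2} Σ_{k=1}^{n-1} conj(α₀) conj(α_n) α_k α_{n-k} )`
equals `(1/4)(N² + 2EN - 3E² + 2ES)`.
(The outer series is indexed by `m = n - 2`, the inner by `j = k - 1`.) -/
theorem truncated_szego_hamiltonian_on_L1 (b a p : ℂ) (hp : ‖p‖ < 1) (E N S : ℝ)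
    (hE : E = ‖b * p + a‖ ^ 2 / (1 - ‖p‖ ^ 2) ^ 2)
    (hN : N = ‖b‖ ^ 2 + (1 - ‖p‖ ^ 2) * E)
    (hS : S = (N + E) * ‖p‖ ^ 2 + (E / 2) * ‖p‖ ^ 4 + 2 * (a * conj b * conj p).re) :
    ‖b‖ ^ 4 / 4 + ‖b‖ ^ 2 * (∑' n : ℕ, ‖(b * p + a) * p ^ n‖ ^ 2)
      + (∑' m : ℕ, ∑ j ∈ Finset.range (m + 1),
          conj b * conj ((b * p + a) * p ^ (m + 1))
            * ((b * p + a) * p ^ j) * ((b * p + a) * p ^ (m - j))).re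
      = (1 / 4) * (N ^ 2 + 2 * E * N - 3 * E ^ 2 + 2 * E * S) := by
  have h_mass : ∑' n : ℕ, ‖(b * p + a) * p ^ n‖ ^ 2 = (1 - ‖p‖ ^ 2) * E := by
    rw [(hasSum_norm_mul_pow_sq (b * p + a) hp).tsum_eq, hE]
    field_simp
  have h_re : (conj b * conj p * (b * p + a)).re
      = ‖b‖ ^ 2 * ‖p‖ ^ 2 + (a * conj b * conj p).re :=
    re_conj_mul_conj_mul_mul_add b a p
  have h_cubic := (hasSum_sum_range_mul_conj_geometric (conj b) (b * p + a) hp).tsum_eq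
  rw [← hE] at h_cubic
  rw [h_mass, h_cubic, RCLike.ofReal_eq_complex_ofReal, Complex.re_ofReal_mul, h_re, hS, hN]
  ring
end

section
/- Let b, a, p ∈ ℂ with |p| < 1, and define E = |bp+a|²/(1−|p|²)², N = |b|² + (1−|p|²)E, S = (N+E)|p|² + (E/2)|p|⁴ + 2Re(a·conj(b)·conj(p)). Then one has the identity (1−|p|²)·(3E − 2(N+S)) = (1+|p|²)·|bp+a|² − 2·|b + a·conj(p)|². In particular, since |p| < 1, the condition 3E − 2(N+S) = 0 (i.e. V_eff(1) = 0 for the effective potential of the truncated Szegő L(1) dynamics) holds if and only if 2|b + a·conj(p)|² = (1+|p|²)|bp+a|². -/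
open ComplexConjugate

/-!
Put `r = re (⟪b, a⟫ * conj p)`. Substituting `N` and `S` leaves `E` in `3E - 2(N + S)` only with the
coefficient `(1 - ‖p‖²)²`, which cancels the denominator of `E`:
`3E - 2(N + S) = ‖pb + a‖² - 2((1 + ‖p‖²)‖b‖² + 2r)`.
The same quantity `(1 + ‖p‖²)‖b‖² + 2r`, multiplied by `1 - ‖p‖²`, is
`‖b + conj p a‖² - ‖p‖²‖pb + a‖²`, and the identity follows on multiplying by `1 - ‖p‖²`.
-/

section InnerProductSpace

variable {𝕜 V : Type*} [RCLike 𝕜] [SeminormedAddCommGroup V] [InnerProductSpace 𝕜 V]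

theorem norm_smul_add_sq (p : 𝕜) (b a : V) :
    ‖p • b + a‖ ^ 2 = ‖p‖ ^ 2 * ‖b‖ ^ 2 + 2 * RCLike.re (inner 𝕜 b a * conj p) + ‖a‖ ^ 2 := by
  rw [norm_add_sq (𝕜 := 𝕜), norm_smul, mul_pow, inner_smul_left, mul_comm (conj p)]

theorem norm_add_conj_smul_sq (p : 𝕜) (b a : V) :
    ‖b + conj p • a‖ ^ 2 = ‖b‖ ^ 2 + 2 * RCLike.re (inner 𝕜 b a * conj p) + ‖p‖ ^ 2 * ‖a‖ ^ 2 := by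
  rw [norm_add_sq (𝕜 := 𝕜), norm_smul, RCLike.norm_conj, mul_pow, inner_smul_right,
    mul_comm (conj p)]

theorem norm_add_conj_smul_sq_sub (p : 𝕜) (b a : V) :
    ‖b + conj p • a‖ ^ 2 - ‖p‖ ^ 2 * ‖p • b + a‖ ^ 2 =
      (1 - ‖p‖ ^ 2) * ((1 + ‖p‖ ^ 2) * ‖b‖ ^ 2 + 2 * RCLike.re (inner 𝕜 b a * conj p)) := by
  rw [norm_add_conj_smul_sq, norm_smul_add_sq]
  ring

theorem turbulence_condition_characterization_general (b a : V) (p : 𝕜) (hp : ‖p‖ ≠ 1)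
    (E N S : ℝ) (hE : E = ‖p • b + a‖ ^ 2 / (1 - ‖p‖ ^ 2) ^ 2)
    (hN : N = ‖b‖ ^ 2 + (1 - ‖p‖ ^ 2) * E)
    (hS : S = (N + E) * ‖p‖ ^ 2 + (E / 2) * ‖p‖ ^ 4 + 2 * RCLike.re (inner 𝕜 b a * conj p)) :
    (1 - ‖p‖ ^ 2) * (3 * E - 2 * (N + S))
        = (1 + ‖p‖ ^ 2) * ‖p • b + a‖ ^ 2 - 2 * ‖b + conj p • a‖ ^ 2
      ∧ (3 * E - 2 * (N + S) = 0 ↔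
          2 * ‖b + conj p • a‖ ^ 2 = (1 + ‖p‖ ^ 2) * ‖p • b + a‖ ^ 2) := by
  have one_sub_ne_zero : 1 - ‖p‖ ^ 2 ≠ 0 :=
    sub_ne_zero.mpr fun h => hp ((pow_eq_one_iff_of_nonneg (norm_nonneg p) two_ne_zero).mp h.symm)
  have energy_mul : (1 - ‖p‖ ^ 2) ^ 2 * E = ‖p • b + a‖ ^ 2 := by
    rw [hE, mul_div_cancel₀ _ (pow_ne_zero 2 one_sub_ne_zero)]
  have potential_eq : 3 * E - 2 * (N + S) = ‖p • b + a‖ ^ 2 -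
      2 * ((1 + ‖p‖ ^ 2) * ‖b‖ ^ 2 + 2 * RCLike.re (inner 𝕜 b a * conj p)) := by
    rw [← energy_mul, hS, hN]
    ring
  have identity : (1 - ‖p‖ ^ 2) * (3 * E - 2 * (N + S)) =
      (1 + ‖p‖ ^ 2) * ‖p • b + a‖ ^ 2 - 2 * ‖b + conj p • a‖ ^ 2 := by
    rw [potential_eq]
    linear_combination 2 * norm_add_conj_smul_sq_sub p b a
  refine ⟨identity, ?_⟩
  rw [← mul_eq_zero_iff_left one_sub_ne_zero, identity, sub_eq_zero, eq_comm]

end InnerProductSpace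

/-- Identity `(1-|p|²)(3E - 2(N+S)) = (1+|p|²)|bp+a|² - 2|b + a conj(p)|²` on `L(1)`,
and the resulting characterization of the turbulence condition `3E - 2(N+S) = 0`. -/
theorem turbulence_condition_characterization (b a p : ℂ) (hp : ‖p‖ < 1) (E N S : ℝ)
    (hE : E = ‖b * p + a‖ ^ 2 / (1 - ‖p‖ ^ 2) ^ 2)
    (hN : N = ‖b‖ ^ 2 + (1 - ‖p‖ ^ 2) * E)
    (hS : S = (N + E) * ‖p‖ ^ 2 + (E / 2) * ‖p‖ ^ 4 + 2 * (a * conj b * conj p).re) :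
    (1 - ‖p‖ ^ 2) * (3 * E - 2 * (N + S))
        = (1 + ‖p‖ ^ 2) * ‖b * p + a‖ ^ 2 - 2 * ‖b + a * conj p‖ ^ 2
      ∧ (3 * E - 2 * (N + S) = 0 ↔
          2 * ‖b + a * conj p‖ ^ 2 = (1 + ‖p‖ ^ 2) * ‖b * p + a‖ ^ 2) := by
  rw [mul_comm b p] at hE ⊢
  rw [mul_comm a (conj p)]
  exact turbulence_condition_characterization_general b a p hp.ne E N S hE hN hS
end

section
/- Let b, p ∈ ℂ with p ≠ 0, let λ ∈ ℝ, and set a := b·p·(1 − e^{iλ}·√(2(1 + 1/|p|²))). Then 2·|b + a·conj(p)|² = (1+|p|²)·|bp + a|². -/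
open ComplexConjugate

/-!
The discrepancy between the two sides of the turbulence condition factors as
`(1 - |p|²) (2 (1 + |p|²) |b|² - |b p - a|²)`, so the condition holds whenever `a` lies on the
circle of centre `b p` and radius `√(2 (1 + |p|²)) |b| = |b p| √(2 (1 + 1/|p|²))`, which is what the
explicit family parametrizes.
-/

theorem sq_mul_sqrt_two_mul_one_add_one_div_sq {x : ℝ} (hx : x ≠ 0) :
    x ^ 2 * √(2 * (1 + 1 / x ^ 2)) ^ 2 = 2 * (1 + x ^ 2) := by
  rw [Real.sq_sqrt (by positivity)]
  field_simp
  ring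

section InnerProductSpace

variable {𝕜 E : Type*} [RCLike 𝕜] [SeminormedAddCommGroup E] [InnerProductSpace 𝕜 E]

theorem two_mul_norm_add_conj_smul_sq_sub (a b : E) (p : 𝕜) :
    2 * ‖b + conj p • a‖ ^ 2 - (1 + ‖p‖ ^ 2) * ‖p • b + a‖ ^ 2 =
      (1 - ‖p‖ ^ 2) * (2 * (1 + ‖p‖ ^ 2) * ‖b‖ ^ 2 - ‖p • b - a‖ ^ 2) := by
  rw [norm_add_sq (𝕜 := 𝕜) b, norm_add_sq (𝕜 := 𝕜) (p • b), norm_sub_sq (𝕜 := 𝕜) (p • b),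
    inner_smul_left, inner_smul_right]
  simp only [norm_smul, RCLike.norm_conj]
  ring

theorem explicit_turbulent_data_general (b : E) {p : 𝕜} (hp : p ≠ 0) {u : 𝕜} (hu : ‖u‖ = 1)
    {a : E} (ha : a = (p * (1 - u * (√(2 * (1 + 1 / ‖p‖ ^ 2)) : ℝ))) • b) :
    2 * ‖b + conj p • a‖ ^ 2 = (1 + ‖p‖ ^ 2) * ‖p • b + a‖ ^ 2 := by
  set s : ℝ := √(2 * (1 + 1 / ‖p‖ ^ 2)) with hs
  have hdiff : p • b - a = (p * (u * (s : 𝕜))) • b := by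
    rw [ha, ← sub_smul]
    ring_nf
  have hcircle : ‖p • b - a‖ ^ 2 = 2 * (1 + ‖p‖ ^ 2) * ‖b‖ ^ 2 :=
    calc ‖p • b - a‖ ^ 2 = ‖p‖ ^ 2 * s ^ 2 * ‖b‖ ^ 2 := by
          simp only [hdiff, norm_smul, norm_mul, hu, one_mul, mul_pow, RCLike.norm_ofReal, sq_abs]
      _ = 2 * (1 + ‖p‖ ^ 2) * ‖b‖ ^ 2 := by
          rw [hs, sq_mul_sqrt_two_mul_one_add_one_div_sq (norm_ne_zero_iff.mpr hp)]
  rw [← sub_eq_zero, two_mul_norm_add_conj_smul_sq_sub, hcircle, sub_self, mul_zero]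

end InnerProductSpace

/-- The explicit family `a = b p (1 - e^{iλ} √(2(1 + 1/|p|²)))` solves the
turbulence condition `2|b + a conj(p)|² = (1+|p|²)|bp+a|²`. -/
theorem explicit_turbulent_data (b p : ℂ) (hp : p ≠ 0) (lam : ℝ)
    (a : ℂ)
    (ha : a = b * p * (1 - Complex.exp (Complex.I * (lam : ℂ))
        * ((Real.sqrt (2 * (1 + 1 / ‖p‖ ^ 2)) : ℝ) : ℂ))) :
    2 * ‖b + a * conj p‖ ^ 2 = (1 + ‖p‖ ^ 2) * ‖b * p + a‖ ^ 2 := by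
  rw [mul_comm a, mul_comm b]
  exact explicit_turbulent_data_general b hp (Complex.norm_exp_I_mul_ofReal lam)
    (by rw [ha, smul_eq_mul, mul_comm b, mul_right_comm]; rfl)
end

section
/- Let K > 0, let c, x₀ ∈ ℝ with c < x₀ and 0 ≤ x₀ < 1, let φ ∈ ℝ, and set ω := √(K(1−c)(1−x₀)). Define x(t) := [ (c−x₀)·cosh(ωt+φ) − c − x₀ + 2cx₀ ] / [ (c−x₀)·cosh(ωt+φ) + c + x₀ − 2 ]. Then the denominator (c−x₀)cosh(ωt+φ) + c + x₀ − 2 is strictly negative for every t ∈ ℝ, and x is differentiable with x'(t)² = K·(1−x(t))²·(x(t)−x₀)·(x(t)−c) for all t ∈ ℝ. -/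
/-!
In terms of the phase `θ = ωt + φ`, the solution is `X = 1 + 2(1-c)(1-x₀)/D`, where `D` is the
denominator. This Möbius substitution sends the double root `1` of the potential to infinity,
and the equation `(1-c)(1-x₀) X'² = (1-X)² (X-x₀)(X-c)` becomes
`D'² = (D + 2(1-c))(D + 2(1-x₀))`. The two factors are `(c-x₀)(cosh θ ∓ 1)`, so this is
`sinh² = cosh² - 1`. Running the phase at speed `ω` with `ω² = K(1-c)(1-x₀)` brings in `K`.
-/

open Real

/-- The denominator of the explicit solution, as a function of the phase `θ = ωt + φ`. -/
noncomputable def szegoDenominator (c x₀ θ : ℝ) : ℝ :=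
  (c - x₀) * cosh θ + c + x₀ - 2

/-- The explicit solution as a function of the phase `θ = ωt + φ`, so that neither `K` nor the
frequency `ω` enters. At a zero of the denominator it takes the junk value `0`. -/
noncomputable def szegoProfile (c x₀ θ : ℝ) : ℝ :=
  ((c - x₀) * cosh θ - c - x₀ + 2 * c * x₀) / szegoDenominator c x₀ θ

section Phase

variable {c x₀ θ : ℝ}

theorem szegoDenominator_neg (hcx : c ≤ x₀) (hc : c < 1) (θ : ℝ) :
    szegoDenominator c x₀ θ < 0 := by
  have h_cosh : (c - x₀) * cosh θ ≤ (c - x₀) * 1 :=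
    mul_le_mul_of_nonpos_left (one_le_cosh θ) (sub_nonpos.mpr hcx)
  unfold szegoDenominator
  linarith

theorem hasDerivAt_szegoDenominator (c x₀ θ : ℝ) :
    HasDerivAt (szegoDenominator c x₀) ((c - x₀) * sinh θ) θ :=
  ((((hasDerivAt_cosh θ).const_mul (c - x₀)).add_const c).add_const x₀).sub_const 2

theorem sq_deriv_szegoDenominator (c x₀ θ : ℝ) :
    deriv (szegoDenominator c x₀) θ ^ 2 =
      (szegoDenominator c x₀ θ + 2 * (1 - c)) * (szegoDenominator c x₀ θ + 2 * (1 - x₀)) := by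
  have h_c : szegoDenominator c x₀ θ + 2 * (1 - c) = (c - x₀) * (cosh θ - 1) := by
    unfold szegoDenominator
    ring
  have h_x₀ : szegoDenominator c x₀ θ + 2 * (1 - x₀) = (c - x₀) * (cosh θ + 1) := by
    unfold szegoDenominator
    ring
  rw [(hasDerivAt_szegoDenominator c x₀ θ).deriv, h_c, h_x₀, mul_pow, sinh_sq]
  ring

theorem szegoProfile_eq_one_add_div (hD : szegoDenominator c x₀ θ ≠ 0) :
    szegoProfile c x₀ θ = 1 + 2 * (1 - c) * (1 - x₀) / szegoDenominator c x₀ θ := by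
  rw [one_add_div hD, szegoProfile]
  congr 1
  unfold szegoDenominator
  ring

theorem hasDerivAt_szegoProfile (hD : szegoDenominator c x₀ θ ≠ 0) :
    HasDerivAt (szegoProfile c x₀)
      (-(2 * (1 - c) * (1 - x₀)) * deriv (szegoDenominator c x₀) θ /
        szegoDenominator c x₀ θ ^ 2) θ := by
  have hderiv := hasDerivAt_szegoDenominator c x₀ θ
  have h_eq : szegoProfile c x₀ =ᶠ[nhds θ]
      fun s ↦ 1 + 2 * (1 - c) * (1 - x₀) / szegoDenominator c x₀ s :=
    (hderiv.continuousAt.eventually_ne hD).mono fun _ ↦ szegoProfile_eq_one_add_div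
  have h_inv := hderiv.differentiableAt.hasDerivAt.fun_inv hD
  exact (((h_inv.const_mul (2 * (1 - c) * (1 - x₀))).const_add 1).congr_of_eventuallyEq
    h_eq).congr_deriv (by ring)

theorem sq_deriv_szegoProfile (hD : szegoDenominator c x₀ θ ≠ 0) :
    (1 - c) * (1 - x₀) * deriv (szegoProfile c x₀) θ ^ 2 =
      (1 - szegoProfile c x₀ θ) ^ 2 * (szegoProfile c x₀ θ - x₀) * (szegoProfile c x₀ θ - c) := by
  rw [(hasDerivAt_szegoProfile hD).deriv, szegoProfile_eq_one_add_div hD, div_pow, mul_pow,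
    sq_deriv_szegoDenominator]
  field_simp
  ring

end Phase

theorem explicit_solution_effective_potential_general {K c x₀ ω : ℝ} (φ : ℝ)
    (hω : ω ^ 2 = K * (1 - c) * (1 - x₀)) (hcx : c ≤ x₀) (hc : c < 1) :
    (∀ t, szegoDenominator c x₀ (ω * t + φ) < 0) ∧
      Differentiable ℝ (fun t ↦ szegoProfile c x₀ (ω * t + φ)) ∧
      ∀ t, deriv (fun t ↦ szegoProfile c x₀ (ω * t + φ)) t ^ 2 =
        K * (1 - szegoProfile c x₀ (ω * t + φ)) ^ 2 * (szegoProfile c x₀ (ω * t + φ) - x₀) *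
          (szegoProfile c x₀ (ω * t + φ) - c) := by
  have hD (θ : ℝ) : szegoDenominator c x₀ θ ≠ 0 := (szegoDenominator_neg hcx hc θ).ne
  have hphase (t : ℝ) : HasDerivAt (fun t ↦ ω * t + φ) ω t :=
    (hasDerivAt_const_mul ω).add_const φ
  have hderiv (t : ℝ) : HasDerivAt (fun t ↦ szegoProfile c x₀ (ω * t + φ))
      (deriv (szegoProfile c x₀) (ω * t + φ) * ω) t :=
    (hasDerivAt_szegoProfile (hD _)).differentiableAt.hasDerivAt.comp t (hphase t)
  refine ⟨fun t ↦ szegoDenominator_neg hcx hc _, fun t ↦ (hderiv t).differentiableAt, fun t ↦ ?_⟩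
  rw [(hderiv t).deriv, mul_pow, hω]
  linear_combination K * sq_deriv_szegoProfile (hD (ω * t + φ))

/-- The explicit function
`x(t) = [(c-x₀)cosh(ωt+φ) - c - x₀ + 2cx₀] / [(c-x₀)cosh(ωt+φ) + c + x₀ - 2]`,
with `ω = √(K(1-c)(1-x₀))`, has everywhere strictly negative denominator and solves
`x'² = K (1-x)² (x-x₀)(x-c)`. -/
theorem explicit_solution_effective_potential (K c x₀ φ : ℝ)
    (hK : 0 < K) (hcx : c < x₀) (hx0 : 0 ≤ x₀) (hx1 : x₀ < 1) :
    (∀ t : ℝ, (c - x₀) * Real.cosh (Real.sqrt (K * (1 - c) * (1 - x₀)) * t + φ)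
        + c + x₀ - 2 < 0)
    ∧ Differentiable ℝ (fun t : ℝ =>
        ((c - x₀) * Real.cosh (Real.sqrt (K * (1 - c) * (1 - x₀)) * t + φ)
            - c - x₀ + 2 * c * x₀)
          / ((c - x₀) * Real.cosh (Real.sqrt (K * (1 - c) * (1 - x₀)) * t + φ)
            + c + x₀ - 2))
    ∧ ∀ t : ℝ,
        (deriv (fun t : ℝ =>
          ((c - x₀) * Real.cosh (Real.sqrt (K * (1 - c) * (1 - x₀)) * t + φ)
              - c - x₀ + 2 * c * x₀)
            / ((c - x₀) * Real.cosh (Real.sqrt (K * (1 - c) * (1 - x₀)) * t + φ)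
              + c + x₀ - 2)) t) ^ 2
        = K * (1 - (((c - x₀) * Real.cosh (Real.sqrt (K * (1 - c) * (1 - x₀)) * t + φ)
              - c - x₀ + 2 * c * x₀)
            / ((c - x₀) * Real.cosh (Real.sqrt (K * (1 - c) * (1 - x₀)) * t + φ)
              + c + x₀ - 2))) ^ 2
          * ((((c - x₀) * Real.cosh (Real.sqrt (K * (1 - c) * (1 - x₀)) * t + φ)
              - c - x₀ + 2 * c * x₀)
            / ((c - x₀) * Real.cosh (Real.sqrt (K * (1 - c) * (1 - x₀)) * t + φ)
              + c + x₀ - 2)) - x₀)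
          * ((((c - x₀) * Real.cosh (Real.sqrt (K * (1 - c) * (1 - x₀)) * t + φ)
              - c - x₀ + 2 * c * x₀)
            / ((c - x₀) * Real.cosh (Real.sqrt (K * (1 - c) * (1 - x₀)) * t + φ)
              + c + x₀ - 2)) - c) := by
  have h_nonneg : 0 ≤ K * (1 - c) * (1 - x₀) :=
    mul_nonneg (mul_nonneg hK.le (by linarith)) (by linarith)
  exact explicit_solution_effective_potential_general φ (sq_sqrt h_nonneg) hcx.le (hcx.trans hx1)
end

section
/- Let K > 0, c < x₀, 0 ≤ x₀ < 1, φ ∈ ℝ, ω := √(K(1−c)(1−x₀)), and x(t) := [ (c−x₀)·cosh(ωt+φ) − c − x₀ + 2cx₀ ] / [ (c−x₀)·cosh(ωt+φ) + c + x₀ − 2 ]. Then lim_{t→∞} e^{ωt}·(1 − x(t)) = 4(1−c)(1−x₀)·e^{−φ}/(x₀ − c). In particular 1 − x(t) decays exponentially, i.e. x(t) → 1 as t → ∞ at the exponential rate ω. -/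
/-!
With `y = ωt + φ`, the numerator and denominator of `x(t)` have the form `a cosh y + p` and
`a cosh y + q` with the same `a = c - x₀ ≠ 0`, so `1 - x = (q - p) / (a cosh y + q)`. Since
`cosh y ~ e^y / 2`, this is asymptotic to `2 (q - p) e^{-y} / a`, and here
`q - p = -2 (1 - c) (1 - x₀)`.
-/

open Filter Topology

section CoshAsymptotics

lemma tendsto_cosh_div_exp_atTop :
    Tendsto (fun y : ℝ => Real.cosh y / Real.exp y) atTop (𝓝 (1 / 2)) := by
  have h_recip : Tendsto (fun y : ℝ => Real.exp (-y) / Real.exp y) atTop (𝓝 0) :=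
    Real.tendsto_exp_neg_atTop_nhds_zero.div_atTop Real.tendsto_exp_atTop
  have h_half : Tendsto (fun y : ℝ => (1 + Real.exp (-y) / Real.exp y) / 2) atTop (𝓝 (1 / 2)) := by
    simpa only [add_zero] using (h_recip.const_add 1).div_const 2
  refine h_half.congr fun y => ?_
  rw [Real.cosh_eq, div_right_comm, add_div (Real.exp y), div_self (Real.exp_ne_zero y)]

lemma tendsto_mul_cosh_add_div_exp_atTop (a b : ℝ) :
    Tendsto (fun y : ℝ => (a * Real.cosh y + b) / Real.exp y) atTop (𝓝 (a / 2)) := by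
  have h_const : Tendsto (fun y : ℝ => b / Real.exp y) atTop (𝓝 0) :=
    tendsto_const_nhds.div_atTop Real.tendsto_exp_atTop
  have h_sum := (tendsto_cosh_div_exp_atTop.const_mul a).add h_const
  simpa only [← mul_div_assoc, ← add_div, mul_one, add_zero] using h_sum

lemma eventually_mul_cosh_add_ne_zero {a : ℝ} (ha : a ≠ 0) (b : ℝ) :
    ∀ᶠ y : ℝ in atTop, a * Real.cosh y + b ≠ 0 := by
  have h_ratio : ∀ᶠ y : ℝ in atTop, (a * Real.cosh y + b) / Real.exp y ≠ 0 :=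
    (tendsto_mul_cosh_add_div_exp_atTop a b).eventually_ne (div_ne_zero ha two_ne_zero)
  exact h_ratio.mono fun y hy => (div_ne_zero_iff.mp hy).1

lemma tendsto_exp_mul_one_sub_cosh_ratio_atTop {a : ℝ} (ha : a ≠ 0) (p q : ℝ) :
    Tendsto (fun y : ℝ => Real.exp y * (1 - (a * Real.cosh y + p) / (a * Real.cosh y + q)))
      atTop (𝓝 (2 * (q - p) / a)) := by
  have h_quot : Tendsto (fun y : ℝ => (q - p) / ((a * Real.cosh y + q) / Real.exp y)) atTop
      (𝓝 ((q - p) / (a / 2))) :=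
    tendsto_const_nhds.div (tendsto_mul_cosh_add_div_exp_atTop a q) (div_ne_zero ha two_ne_zero)
  have h_limit : (q - p) / (a / 2) = 2 * (q - p) / a := by
    rw [div_div_eq_mul_div, mul_comm]
  rw [← h_limit]
  refine h_quot.congr' ?_
  filter_upwards [eventually_mul_cosh_add_ne_zero ha q] with y hy
  rw [one_sub_div hy, add_sub_add_left_eq_sub, div_div_eq_mul_div, mul_comm, mul_div_assoc]

end CoshAsymptotics

lemma tendsto_of_tendsto_mul_const_sub {α 𝕜 : Type*} [Field 𝕜] [LinearOrder 𝕜]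
    [IsStrictOrderedRing 𝕜] [TopologicalSpace 𝕜] [OrderTopology 𝕜] {l : Filter α} {f g : α → 𝕜}
    {a b : 𝕜} (hg : Tendsto g l atTop) (h : Tendsto (fun t => g t * (a - f t)) l (𝓝 b)) :
    Tendsto f l (𝓝 a) := by
  have h_diff : Tendsto (fun t => a - g t * (a - f t) / g t) l (𝓝 a) := by
    simpa only [sub_zero] using (h.div_atTop hg).const_sub a
  refine h_diff.congr' ?_
  filter_upwards [hg.eventually_ne_atTop 0] with t ht
  rw [mul_div_cancel_left₀ _ ht, sub_sub_cancel]

/-- The explicit solution `x(t)` of `x'² = K(1 - x)²(x - x₀)(x - c)`. The frequency `ω` is a free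
parameter here; the equation itself holds when `ω = √(K(1 - c)(1 - x₀))`. -/
noncomputable def explicitSolution (c x₀ ω φ t : ℝ) : ℝ :=
  ((c - x₀) * Real.cosh (ω * t + φ) - c - x₀ + 2 * c * x₀)
    / ((c - x₀) * Real.cosh (ω * t + φ) + c + x₀ - 2)

section ExplicitSolution

variable {c x₀ ω : ℝ}

lemma tendsto_exp_mul_one_sub_explicitSolution (hω : 0 < ω) (hcx : c ≠ x₀) (φ : ℝ) :
    Tendsto (fun t => Real.exp (ω * t) * (1 - explicitSolution c x₀ ω φ t)) atTop
      (𝓝 (4 * (1 - c) * (1 - x₀) * Real.exp (-φ) / (x₀ - c))) := by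
  have h_phase : Tendsto (fun t => ω * t + φ) atTop atTop :=
    tendsto_atTop_add_const_right _ φ (tendsto_id.const_mul_atTop hω)
  have h_lim := ((tendsto_exp_mul_one_sub_cosh_ratio_atTop (sub_ne_zero.mpr hcx)
    (-c - x₀ + 2 * c * x₀) (c + x₀ - 2)).comp h_phase).const_mul (Real.exp (-φ))
  have h_coeff : Real.exp (-φ) * (2 * (c + x₀ - 2 - (-c - x₀ + 2 * c * x₀)) / (c - x₀))
      = 4 * (1 - c) * (1 - x₀) * Real.exp (-φ) / (x₀ - c) := by
    rw [← neg_sub x₀ c, div_neg]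
    ring
  rw [h_coeff] at h_lim
  refine h_lim.congr fun t => ?_
  have h_exp : Real.exp (-φ) * Real.exp (ω * t + φ) = Real.exp (ω * t) := by
    rw [← Real.exp_add, neg_add_cancel_comm_assoc]
  rw [Function.comp_apply, ← mul_assoc, h_exp, explicitSolution]
  ring

lemma tendsto_explicitSolution_atTop (hω : 0 < ω) (hcx : c ≠ x₀) (φ : ℝ) :
    Tendsto (explicitSolution c x₀ ω φ) atTop (𝓝 1) :=
  tendsto_of_tendsto_mul_const_sub
    (Real.tendsto_exp_atTop.comp (tendsto_id.const_mul_atTop hω))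
    (tendsto_exp_mul_one_sub_explicitSolution hω hcx φ)

theorem explicit_solution_exponential_approach_general (hω : 0 < ω) (hcx : c ≠ x₀) (φ : ℝ) :
    Tendsto (fun t => Real.exp (ω * t) * (1 - explicitSolution c x₀ ω φ t)) atTop
      (𝓝 (4 * (1 - c) * (1 - x₀) * Real.exp (-φ) / (x₀ - c)))
    ∧ Tendsto (explicitSolution c x₀ ω φ) atTop (𝓝 1) :=
  ⟨tendsto_exp_mul_one_sub_explicitSolution hω hcx φ, tendsto_explicitSolution_atTop hω hcx φ⟩

end ExplicitSolution

/-- For the explicit solution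
`x(t) = [(c-x₀)cosh(ωt+φ) - c - x₀ + 2cx₀] / [(c-x₀)cosh(ωt+φ) + c + x₀ - 2]`,
with `ω = √(K(1-c)(1-x₀))`, one has
`e^{ωt}(1 - x(t)) → 4(1-c)(1-x₀)e^{-φ}/(x₀-c)` as `t → ∞`; in particular
`x(t) → 1` exponentially fast. -/
theorem explicit_solution_exponential_approach (K c x₀ φ : ℝ)
    (hK : 0 < K) (hcx : c < x₀) (hx0 : 0 ≤ x₀) (hx1 : x₀ < 1) :
    Tendsto (fun t : ℝ =>
        Real.exp (Real.sqrt (K * (1 - c) * (1 - x₀)) * t)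
          * (1 - ((c - x₀) * Real.cosh (Real.sqrt (K * (1 - c) * (1 - x₀)) * t + φ)
              - c - x₀ + 2 * c * x₀)
            / ((c - x₀) * Real.cosh (Real.sqrt (K * (1 - c) * (1 - x₀)) * t + φ)
              + c + x₀ - 2)))
      atTop (𝓝 (4 * (1 - c) * (1 - x₀) * Real.exp (-φ) / (x₀ - c)))
    ∧ Tendsto (fun t : ℝ =>
        ((c - x₀) * Real.cosh (Real.sqrt (K * (1 - c) * (1 - x₀)) * t + φ)
            - c - x₀ + 2 * c * x₀)
          / ((c - x₀) * Real.cosh (Real.sqrt (K * (1 - c) * (1 - x₀)) * t + φ)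
            + c + x₀ - 2))
      atTop (𝓝 1) := by
  exact explicit_solution_exponential_approach_general
    (Real.sqrt_pos.mpr (mul_pos (mul_pos hK (by linarith)) (by linarith))) hcx.ne φ
end
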